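/- arXiv:2002.12396 — 5 statements merged into one kernel-verified Lean document; each statement's English description precedes it below -/
import Mathlib

section
/- Let ε be an orientation of the type A_n quiver. A stability condition (w,r) ∈ ℝ^n × (ℝ_{>0})^n is totally stable (i.e. (w,r) ∈ TS(ε)) if and only if the following n−1 inequalities hold: μ_{w,r}(X_0) > μ_{w,r}(X_1) > ⋯ > μ_{w,r}(X_{x(n)}) and μ_{w,r}(Y_0) < μ_{w,r}(Y_1) < ⋯ < μ_{w,r}(Y_{y(n)}). -/
/-!
Plot the partial sums `P_m = (∑_{z<m} r z, ∑_{z<m} w z)`, `0 ≤ m ≤ n`, so that the slope of an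
interval of vertices is the slope of the chord joining two of these points. Call an interior point
`P_{c+1}` *upper* if `ε c = true` and *lower* otherwise. The sets `X_k` are the intervals between
consecutive upper points (together with `P_0` and `P_n`), and the `Y_l` are those between
consecutive lower points. The chain inequalities thus say that the upper points form a strictly
concave polygon and the lower points a strictly convex one, both with end points `P_0` and `P_n`.

Chains imply total stability. Through an upper point `P_{c+1}` draw a line whose slope `s` lies
strictly between those of the two adjacent edges of the concave polygon. Every other upper point,
`P_0` and `P_n` lie strictly below it, and so does every lower point, because by convexity a lower
point is not above both `P_0` and `P_n` in the direction of that line (`exists_supporting_slope`).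
Hence cutting an interval at an arrow `→` gives a left part of slope `> s` and a right part of
slope `< s`; arrows `←` are handled by the symmetry `(ε, w) ↦ (!ε, -w)`. For an arbitrary
successor-closed `S ⊊ T`, put `e = w - μ(T) r`; summation by parts writes `∑_{z ∈ S} e z` as a
combination of the partial sums of `e` over initial segments of `T`, in which every term is
nonpositive and some term is negative (`sum_neg_of_succClosed`).

Conversely, `X_k ∪ X_{k+1}` and `Y_l ∪ Y_{l+1}` are intervals in which `X_{k+1}`, respectively
`Y_l`, is successor-closed.
-/

open Finset

/-- The muSlope `μ_{w,r}(S) = (Σ_{z∈S} w z)/(Σ_{z∈S} r z)` of a subset of vertices. -/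
noncomputable def muSlope {n : ℕ} (w r : Fin n → ℝ) (S : Finset (Fin n)) : ℝ :=
  (∑ z ∈ S, w z) / (∑ z ∈ S, r z)

/-- `T` is an interval of vertices. -/
def IsInterval {n : ℕ} (T : Finset (Fin n)) : Prop :=
  ∃ a b : Fin n, T = Finset.Icc a b

/-- `S` is successor-closed in `T` with respect to the orientation `ε`
(`ε i = true` means there is an arrow `i → i+1`, `ε i = false` an arrow `i+1 → i`). -/
def SuccClosed {n : ℕ} (ε : ℕ → Bool) (T S : Finset (Fin n)) : Prop :=
  ∀ i j : Fin n, i ∈ T → j ∈ T → (j : ℕ) = (i : ℕ) + 1 →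
    ((ε (i : ℕ) = true → i ∈ S → j ∈ S) ∧ (ε (i : ℕ) = false → j ∈ S → i ∈ S))

/-- `(w, r)` is a total stability condition for the type `A_n` quiver with orientation `ε`. -/
def TotallyStable {n : ℕ} (ε : ℕ → Bool) (w r : Fin n → ℝ) : Prop :=
  ∀ T S : Finset (Fin n), IsInterval T → S ⊆ T → S.Nonempty → S ≠ T →
    SuccClosed ε T S → muSlope w r S < muSlope w r T

/-- `x`-coordinate of the vertex with `m` vertices before it: number of `→` arrows among
the first `m` arrows. -/
def xc (ε : ℕ → Bool) (m : ℕ) : ℕ := ((Finset.range m).filter (fun i => ε i = true)).card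

/-- `y`-coordinate: number of `←` arrows among the first `m` arrows. -/
def yc (ε : ℕ → Bool) (m : ℕ) : ℕ := ((Finset.range m).filter (fun i => ε i = false)).card

/-- `X_k`: the set of vertices with `x`-coordinate `k`. -/
def Xset {n : ℕ} (ε : ℕ → Bool) (k : ℕ) : Finset (Fin n) :=
  Finset.univ.filter (fun z => xc ε (z : ℕ) = k)

/-- `Y_k`: the set of vertices with `y`-coordinate `k`. -/
def Yset {n : ℕ} (ε : ℕ → Bool) (k : ℕ) : Finset (Fin n) :=
  Finset.univ.filter (fun z => yc ε (z : ℕ) = k)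

/-- `X̃_k`: the set of vertices with `x`-coordinate at least `k`. -/
def Xtil {n : ℕ} (ε : ℕ → Bool) (k : ℕ) : Finset (Fin n) :=
  Finset.univ.filter (fun z => k ≤ xc ε (z : ℕ))

/-- `Ỹ_k`: the set of vertices with `y`-coordinate at least `k`. -/
def Ytil {n : ℕ} (ε : ℕ → Bool) (k : ℕ) : Finset (Fin n) :=
  Finset.univ.filter (fun z => k ≤ yc ε (z : ℕ))

/-- The partial sum of `d` over the vertices before position `m`. -/
noncomputable def prefixSum {n : ℕ} (d : Fin n → ℝ) (m : ℕ) : ℝ :=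
  ∑ z ∈ Finset.univ.filter (fun z : Fin n => (z : ℕ) < m), d z

/-! ### Coordinates -/

lemma xc_succ (ε : ℕ → Bool) (m : ℕ) :
    xc ε (m + 1) = xc ε m + if ε m = true then 1 else 0 := by
  unfold xc
  rw [Finset.range_add_one, Finset.filter_insert]
  split_ifs with h
  · rw [Finset.card_insert_of_notMem (by simp)]
  · simp

lemma xc_not (ε : ℕ → Bool) (m : ℕ) : xc (fun i => !ε i) m = yc ε m := by
  simp [xc, yc]

lemma yc_not (ε : ℕ → Bool) (m : ℕ) : yc (fun i => !ε i) m = xc ε m := by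
  simp [xc, yc]

lemma Xset_not {n : ℕ} (ε : ℕ → Bool) (k : ℕ) :
    (Xset (fun i => !ε i) k : Finset (Fin n)) = Yset ε k := by
  simp [Xset, Yset, xc_not]

lemma Yset_not {n : ℕ} (ε : ℕ → Bool) (k : ℕ) :
    (Yset (fun i => !ε i) k : Finset (Fin n)) = Xset ε k := by
  simp [Xset, Yset, yc_not]

lemma yc_succ (ε : ℕ → Bool) (m : ℕ) :
    yc ε (m + 1) = yc ε m + if ε m = false then 1 else 0 := by
  rw [← xc_not, xc_succ, xc_not]
  simp

lemma xc_mono (ε : ℕ → Bool) : Monotone (xc ε) :=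
  monotone_nat_of_le_succ fun m => by rw [xc_succ]; omega

lemma yc_mono (ε : ℕ → Bool) : Monotone (yc ε) :=
  monotone_nat_of_le_succ fun m => by rw [yc_succ]; omega

/-- The coordinate grows in steps of at most one, so it takes every intermediate value. -/
lemma exists_xc_eq (ε : ℕ → Bool) (m j : ℕ) (hj : j ≤ xc ε m) : ∃ z ≤ m, xc ε z = j := by
  induction m with
  | zero => exact ⟨0, le_rfl, by simp [xc] at hj ⊢; omega⟩
  | succ m ih =>
    by_cases h : j ≤ xc ε m
    · obtain ⟨z, hz, rfl⟩ := ih h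
      exact ⟨z, by omega, rfl⟩
    · refine ⟨m + 1, le_rfl, ?_⟩
      rw [xc_succ] at hj ⊢
      split_ifs at hj ⊢ <;> omega

lemma Xset_nonempty {n : ℕ} (hn : 0 < n) (ε : ℕ → Bool) (j : ℕ) (hj : j ≤ xc ε (n - 1)) :
    (Xset ε j : Finset (Fin n)).Nonempty := by
  obtain ⟨z, hz, h⟩ := exists_xc_eq ε _ _ hj
  exact ⟨⟨z, by omega⟩, by simp [Xset, h]⟩

lemma Yset_nonempty {n : ℕ} (hn : 0 < n) (ε : ℕ → Bool) (j : ℕ) (hj : j ≤ yc ε (n - 1)) :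
    (Yset ε j : Finset (Fin n)).Nonempty := by
  rw [← Xset_not]
  exact Xset_nonempty hn _ _ (by rwa [xc_not])

/-! ### Slopes -/

lemma lt_muSlope_iff {n : ℕ} {w r : Fin n → ℝ} (hr : ∀ i, 0 < r i) {S : Finset (Fin n)}
    (hS : S.Nonempty) (s : ℝ) : s < muSlope w r S ↔ 0 < ∑ z ∈ S, (w z - s * r z) := by
  have h : 0 < ∑ z ∈ S, r z := Finset.sum_pos (fun i _ => hr i) hS
  rw [muSlope, lt_div_iff₀ h, Finset.sum_sub_distrib, ← Finset.mul_sum, sub_pos]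

lemma muSlope_lt_iff {n : ℕ} {w r : Fin n → ℝ} (hr : ∀ i, 0 < r i) {S : Finset (Fin n)}
    (hS : S.Nonempty) (s : ℝ) : muSlope w r S < s ↔ ∑ z ∈ S, (w z - s * r z) < 0 := by
  have h : 0 < ∑ z ∈ S, r z := Finset.sum_pos (fun i _ => hr i) hS
  rw [muSlope, div_lt_iff₀ h, Finset.sum_sub_distrib, ← Finset.mul_sum, sub_neg]

lemma sum_sub_muSlope {n : ℕ} {w r : Fin n → ℝ} (hr : ∀ i, 0 < r i) {S : Finset (Fin n)}
    (hS : S.Nonempty) : ∑ z ∈ S, (w z - muSlope w r S * r z) = 0 := by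
  have h : 0 < ∑ z ∈ S, r z := Finset.sum_pos (fun i _ => hr i) hS
  rw [Finset.sum_sub_distrib, ← Finset.mul_sum, muSlope, div_mul_cancel₀ _ h.ne', sub_self]

lemma muSlope_neg {n : ℕ} (w r : Fin n → ℝ) (S : Finset (Fin n)) :
    muSlope (fun z => -w z) r S = -muSlope w r S := by
  simp [muSlope, neg_div]

/-- If a part has smaller slope than the whole, it has smaller slope than the remaining part. -/
lemma muSlope_lt_of_lt_union {n : ℕ} {w r : Fin n → ℝ} (hr : ∀ i, 0 < r i)
    {A B : Finset (Fin n)} (hA : A.Nonempty) (hB : B.Nonempty) (hd : Disjoint A B)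
    (h : muSlope w r A < muSlope w r (A ∪ B)) : muSlope w r A < muSlope w r B := by
  rw [lt_muSlope_iff hr (hA.mono Finset.subset_union_left), Finset.sum_union hd,
    sum_sub_muSlope hr hA, zero_add] at h
  exact (lt_muSlope_iff hr hB _).2 h

/-! ### Partial sums -/

lemma prefixSum_zero {n : ℕ} (d : Fin n → ℝ) : prefixSum d 0 = 0 := by
  simp [prefixSum]

lemma prefixSum_succ {n : ℕ} (d : Fin n → ℝ) (m : Fin n) :
    prefixSum d (m + 1) = prefixSum d m + d m := by
  unfold prefixSum
  have : (Finset.univ.filter fun z : Fin n => (z : ℕ) < m + 1)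
      = insert m (Finset.univ.filter fun z : Fin n => (z : ℕ) < m) := by
    ext z
    simp [Fin.ext_iff]
    omega
  rw [this, Finset.sum_insert (by simp), add_comm]

lemma prefixSum_add_sum_Icc {n : ℕ} (d : Fin n → ℝ) (a b : Fin n) (h : (a : ℕ) ≤ b + 1) :
    prefixSum d a + ∑ z ∈ Finset.Icc a b, d z = prefixSum d (b + 1) := by
  unfold prefixSum
  rw [← Finset.sum_union]
  · congr 1
    ext z
    simp only [Finset.mem_union, Finset.mem_filter, Finset.mem_univ, true_and, Finset.mem_Icc, Fin.le_def]
    omega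
  · rw [Finset.disjoint_left]
    intro z
    simp only [Finset.mem_filter, Finset.mem_univ, true_and, Finset.mem_Icc, Fin.le_def]
    omega

/-- A partial sum ending at a boundary of the blocks `X_j` is a sum of block sums. -/
lemma prefixSum_eq_sum_Xset {n : ℕ} (ε : ℕ → Bool) (d : Fin n → ℝ) (m K : ℕ)
    (h : ∀ z : Fin n, (z : ℕ) < m ↔ xc ε z < K) :
    prefixSum d m = ∑ j ∈ Finset.range K, ∑ z ∈ Xset ε j, d z := by
  unfold prefixSum
  rw [← Finset.sum_fiberwise_of_maps_to (t := Finset.range K) (g := fun z : Fin n => xc ε z)]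
  · refine Finset.sum_congr rfl fun j hj => Finset.sum_congr ?_ fun _ _ => rfl
    ext z
    simp only [Finset.mem_range] at hj
    simp only [Xset, Finset.mem_filter, Finset.mem_univ, true_and, h]
    omega
  · intro z hz
    simpa [h] using hz

lemma prefixSum_upper {n : ℕ} (ε : ℕ → Bool) (d : Fin n → ℝ) (c : ℕ) (hc : ε c = true) :
    prefixSum d (c + 1) = ∑ j ∈ Finset.range (xc ε c + 1), ∑ z ∈ Xset ε j, d z := by
  refine prefixSum_eq_sum_Xset ε d _ _ fun z => ?_
  constructor
  · intro h
    have := xc_mono ε (show (z : ℕ) ≤ c by omega)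
    omega
  · intro h
    by_contra h'
    have := xc_mono ε (show c + 1 ≤ (z : ℕ) by omega)
    rw [xc_succ, if_pos hc] at this
    omega

lemma prefixSum_full {n : ℕ} (ε : ℕ → Bool) (d : Fin n → ℝ) :
    prefixSum d n = ∑ j ∈ Finset.range (xc ε (n - 1) + 1), ∑ z ∈ Xset ε j, d z := by
  refine prefixSum_eq_sum_Xset ε d _ _ fun z => ?_
  have := xc_mono ε (show (z : ℕ) ≤ n - 1 by omega)
  have := z.2
  omega

/-! ### Supporting lines -/

lemma chain_lt {f : ℕ → ℝ} {K : ℕ} (h : ∀ k, k < K → f (k + 1) < f k) {i j : ℕ}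
    (hij : i < j) (hj : j ≤ K) : f j < f i := by
  induction j, hij using Nat.le_induction with
  | base => exact h _ hj
  | succ j hij ih => exact (h j (by omega)).trans (ih (by omega))

lemma chain_le {f : ℕ → ℝ} {K : ℕ} (h : ∀ k, k < K → f (k + 1) < f k) {i j : ℕ}
    (hij : i ≤ j) (hj : j ≤ K) : f j ≤ f i := by
  rcases hij.eq_or_lt with rfl | hij
  · exact le_rfl
  · exact (chain_lt h hij hj).le

/-- If the edge slopes decrease along the upper polygon, then in any direction an upper point
lies on or above one of the two end points. -/
lemma min_le_prefixSum_upper {n : ℕ} (hn : 0 < n) (ε : ℕ → Bool) (w r : Fin n → ℝ)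
    (hr : ∀ i, 0 < r i)
    (hX : ∀ k, k < xc ε (n - 1) → muSlope w r (Xset ε (k + 1)) < muSlope w r (Xset ε k))
    (s : ℝ) (c : ℕ) (hcn : c + 1 < n) (hc : ε c = true) :
    0 ≤ prefixSum (fun z => w z - s * r z) (c + 1) ∨
      prefixSum (fun z => w z - s * r z) n ≤ prefixSum (fun z => w z - s * r z) (c + 1) := by
  have hcK : xc ε c + 1 ≤ xc ε (n - 1) := by
    have := xc_mono ε (show c + 1 ≤ n - 1 by omega)
    rwa [xc_succ, if_pos hc] at this
  rw [prefixSum_full ε, prefixSum_upper ε _ c hc]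
  -- Compare `s` with the slope of the edge ending at the point.
  rcases lt_or_ge s (muSlope w r (Xset ε (xc ε c))) with h | h
  · left
    refine Finset.sum_nonneg fun j hj => le_of_lt ?_
    rw [Finset.mem_range] at hj
    rw [← lt_muSlope_iff hr (Xset_nonempty hn ε j (by omega))]
    exact h.trans_le (chain_le (f := fun k => muSlope w r (Xset ε k)) hX
      (by omega) (by omega))
  · right
    rw [← Finset.sum_range_add_sum_Ico _ (show xc ε c + 1 ≤ xc ε (n - 1) + 1 by omega)]
    have : ∑ j ∈ Finset.Ico (xc ε c + 1) (xc ε (n - 1) + 1),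
        ∑ z ∈ Xset ε j, (w z - s * r z) ≤ 0 := by
      refine Finset.sum_nonpos fun j hj => le_of_lt ?_
      rw [Finset.mem_Ico] at hj
      rw [← muSlope_lt_iff hr (Xset_nonempty hn ε j (by omega))]
      exact (chain_lt (f := fun k => muSlope w r (Xset ε k)) hX
        (by omega) (by omega)).trans_le h
    linarith

lemma prefixSum_neg {n : ℕ} (w r : Fin n → ℝ) (s : ℝ) (m : ℕ) :
    prefixSum (fun z => -w z - -s * r z) m = -prefixSum (fun z => w z - s * r z) m := by
  unfold prefixSum
  rw [← Finset.sum_neg_distrib]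
  exact Finset.sum_congr rfl fun z _ => by ring

/-- The two chains of inequalities, as a predicate that can be transported along
`(ε, w) ↦ (!ε, -w)`. -/
def Chains {n : ℕ} (ε : ℕ → Bool) (w r : Fin n → ℝ) : Prop :=
  (∀ k, k < xc ε (n - 1) → muSlope w r (Xset ε (k + 1)) < muSlope w r (Xset ε k)) ∧
    (∀ l, l < yc ε (n - 1) → muSlope w r (Yset ε l) < muSlope w r (Yset ε (l + 1)))

lemma Chains.not {n : ℕ} {ε : ℕ → Bool} {w r : Fin n → ℝ} (h : Chains ε w r) :
    Chains (fun i => !ε i) (fun z => -w z) r := by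
  constructor
  · intro k hk
    rw [xc_not] at hk
    simpa [muSlope_neg, Xset_not] using h.2 k hk
  · intro k hk
    rw [yc_not] at hk
    simpa [muSlope_neg, Yset_not] using h.1 k hk

/-- Through every upper point passes a line lying strictly above all the other points. -/
lemma exists_supporting_slope {n : ℕ} (hn : 0 < n) (ε : ℕ → Bool) (w r : Fin n → ℝ)
    (hr : ∀ i, 0 < r i) (h : Chains ε w r) (c : ℕ) (hcn : c + 1 < n) (hc : ε c = true) :
    ∃ s : ℝ, ∀ m ≤ n, m ≠ c + 1 →
      prefixSum (fun z => w z - s * r z) m < prefixSum (fun z => w z - s * r z) (c + 1) := by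
  have hcK : xc ε c + 1 ≤ xc ε (n - 1) := by
    have := xc_mono ε (show c + 1 ≤ n - 1 by omega)
    rwa [xc_succ, if_pos hc] at this
  obtain ⟨s, hs1, hs2⟩ := exists_between (h.1 (xc ε c) hcK)
  refine ⟨s, ?_⟩
  set d : Fin n → ℝ := fun z => w z - s * r z with hd
  have hpos : ∀ j, j ≤ xc ε c → 0 < ∑ z ∈ Xset ε j, d z := by
    intro j hj
    rw [hd, ← lt_muSlope_iff hr (Xset_nonempty hn ε j (by omega))]
    exact hs2.trans_le (chain_le (f := fun k => muSlope w r (Xset ε k)) h.1 hj (by omega))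
  have hneg : ∀ j, xc ε c + 1 ≤ j → j ≤ xc ε (n - 1) → ∑ z ∈ Xset ε j, d z < 0 := by
    intro j hj hj'
    rw [hd, ← muSlope_lt_iff hr (Xset_nonempty hn ε j (by omega))]
    exact (chain_le (f := fun k => muSlope w r (Xset ε k)) h.1 hj hj').trans_lt hs1
  -- Vertices of the upper polygon: partial sums over whole numbers of blocks.
  have key : ∀ K ≤ xc ε (n - 1) + 1, K ≠ xc ε c + 1 →
      ∑ j ∈ Finset.range K, ∑ z ∈ Xset ε j, d z < prefixSum d (c + 1) := by
    intro K hK hne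
    rw [prefixSum_upper ε d c hc]
    rcases Nat.lt_or_gt_of_ne hne with hlt | hgt
    · rw [← Finset.sum_range_add_sum_Ico _ hlt.le]
      have : 0 < ∑ j ∈ Finset.Ico K (xc ε c + 1), ∑ z ∈ Xset ε j, d z :=
        Finset.sum_pos (fun j hj => hpos j (by rw [Finset.mem_Ico] at hj; omega))
          (by simpa using hlt)
      linarith
    · rw [← Finset.sum_range_add_sum_Ico _ hgt.le]
      have : ∑ j ∈ Finset.Ico (xc ε c + 1) K, ∑ z ∈ Xset ε j, d z < 0 :=
        Finset.sum_neg (fun j hj => by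
          rw [Finset.mem_Ico] at hj; exact hneg j (by omega) (by omega))
          (by simpa using hgt)
      linarith
  have h0 : 0 < prefixSum d (c + 1) := by simpa using key 0 (by omega) (by omega)
  have hN : prefixSum d n < prefixSum d (c + 1) := by
    rw [prefixSum_full ε d]
    exact key _ le_rfl (by omega)
  intro m hm hne
  rcases m with _ | m
  · rwa [prefixSum_zero]
  rcases hm.eq_or_lt with rfl | hm
  · exact hN
  cases hmε : ε m with
  | true =>
    rw [prefixSum_upper ε d m hmε]
    have hmK := xc_mono ε (show m + 1 ≤ n - 1 by omega)
    rw [xc_succ, if_pos hmε] at hmK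
    refine key _ (by omega) fun heq => ?_
    rcases Nat.lt_or_gt_of_ne hne with hlt | hgt
    · have := xc_mono ε (show m + 1 ≤ c by omega)
      rw [xc_succ, if_pos hmε] at this
      omega
    · have := xc_mono ε (show c + 1 ≤ m by omega)
      rw [xc_succ, if_pos hc] at this
      omega
  | false =>
    have := min_le_prefixSum_upper hn _ _ r hr h.not.1 (-s) m hm (by simp [hmε])
    simp only [prefixSum_neg] at this
    rcases this with h' | h' <;> linarith

/-- Cutting an interval at an arrow `→` leaves a left part of larger slope than the whole; this is
phrased through the partial sums of `w - t r`, where `t` is the slope of the whole interval. -/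
lemma prefixSum_pos_of_upper {n : ℕ} (hn : 0 < n) (ε : ℕ → Bool) (w r : Fin n → ℝ)
    (hr : ∀ i, 0 < r i) (h : Chains ε w r) (t : ℝ) (a b : Fin n)
    (ht : prefixSum (fun z => w z - t * r z) (b + 1) = prefixSum (fun z => w z - t * r z) a)
    (c : Fin n) (hac : a ≤ c) (hcb : c < b) (hc : ε c = true) :
    prefixSum (fun z => w z - t * r z) a < prefixSum (fun z => w z - t * r z) (c + 1) := by
  simp only [Fin.le_def, Fin.lt_def] at hac hcb
  obtain ⟨s, hs⟩ := exists_supporting_slope hn ε w r hr h c (by omega) hc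
  have h1 := hs a (by omega) (by omega)
  have h2 := hs (b + 1) (by omega) (by omega)
  have conv : ∀ m, prefixSum (fun z => w z - s * r z) m
      = prefixSum (fun z => w z - t * r z) m + (t - s) * prefixSum r m := by
    intro m
    unfold prefixSum
    rw [Finset.mul_sum, ← Finset.sum_add_distrib]
    exact Finset.sum_congr rfl fun z _ => by ring
  rw [conv, conv (c + 1)] at h1 h2
  have hR : ∀ m m', m ≤ m' → prefixSum r m ≤ prefixSum r m' := by
    intro m m' hm
    refine Finset.sum_le_sum_of_subset_of_nonneg ?_ fun z _ _ => (hr z).le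
    intro z
    simp only [Finset.mem_filter, Finset.mem_univ, true_and]
    omega
  have hR1 := hR a (c + 1) (by omega)
  have hR2 := hR (c + 1) (b + 1) (by omega)
  rcases le_total s t with hst | hst
  · nlinarith
  · nlinarith

/-! ### Successor-closed subsets -/

/-- Summation by parts: the sum over a proper nonempty successor-closed subset is negative as soon
as the partial sums over initial segments of `T` are positive at arrows `→`, negative at arrows `←`,
and zero at the right end. -/
lemma sum_neg_of_succClosed {n : ℕ} (ε : ℕ → Bool) (e : Fin n → ℝ) (a b : Fin n) (hab : a ≤ b)
    (S : Finset (Fin n)) (hS : S ⊆ Finset.Icc a b) (hne : S.Nonempty)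
    (hST : S ≠ Finset.Icc a b) (hcl : SuccClosed ε (Finset.Icc a b) S)
    (hend : prefixSum e (b + 1) = prefixSum e a)
    (hup : ∀ c, a ≤ c → c < b → ε c = true → prefixSum e a < prefixSum e (c + 1))
    (hdown : ∀ c, a ≤ c → c < b → ε c = false → prefixSum e (c + 1) < prefixSum e a) :
    ∑ z ∈ S, e z < 0 := by
  set d : Fin n → ℝ := fun z => if z ∈ S then e z else 0 with hd
  -- `H m` is the sum of the terms `(1_S(z) - 1_S(z+1)) E(z)`, `a ≤ z < m`, of the summation by
  -- parts, where `E` denotes the partial sums of `e` over initial segments.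
  let H : Fin n → ℝ := fun m => (prefixSum d (m + 1) - prefixSum d a) -
    if m ∈ S then prefixSum e (m + 1) - prefixSum e a else 0
  have main : ∀ (k : ℕ) (hk : k < n), (a : ℕ) ≤ k → k ≤ b →
      H ⟨k, hk⟩ ≤ 0 ∧ (H ⟨k, hk⟩ = 0 → ∀ z : Fin n, a ≤ z → (z : ℕ) ≤ k →
        (z ∈ S ↔ (⟨k, hk⟩ : Fin n) ∈ S)) := by
    intro k hk hak
    induction k, hak using Nat.le_induction with
    | base =>
      intro _
      have h0 : H a = 0 := by
        simp only [H, prefixSum_succ, hd]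
        split_ifs <;> ring
      refine ⟨h0.le, fun _ z h1 h2 => ?_⟩
      rw [show z = a from le_antisymm h2 h1]
    | succ k hak ih =>
      intro hkb
      have hk' : k < n := by omega
      obtain ⟨ih1, ih2⟩ := ih hk' (by omega)
      have e1 := prefixSum_succ e ⟨k + 1, hk⟩
      have d1 := prefixSum_succ d ⟨k + 1, hk⟩
      have cl := hcl ⟨k, hk'⟩ ⟨k + 1, hk⟩
        (by simp [Fin.le_def]; omega) (by simp [Fin.le_def]; omega) rfl
      have up := hup ⟨k, hk'⟩ (by simpa [Fin.le_def] using hak) (by simp [Fin.lt_def]; omega)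
      have down := hdown ⟨k, hk'⟩ (by simpa [Fin.le_def] using hak) (by simp [Fin.lt_def]; omega)
      simp only [hd] at e1 d1 cl up down
      -- Either `1_S` does not change between `k` and `k + 1`, and neither does `H`, or `H` drops.
      have step : (H ⟨k + 1, hk⟩ = H ⟨k, hk'⟩ ∧
          ((⟨k, hk'⟩ : Fin n) ∈ S ↔ (⟨k + 1, hk⟩ : Fin n) ∈ S)) ∨
          H ⟨k + 1, hk⟩ < H ⟨k, hk'⟩ := by
        simp only [H, hd]
        by_cases m1 : (⟨k, hk'⟩ : Fin n) ∈ S <;> by_cases m2 : (⟨k + 1, hk⟩ : Fin n) ∈ S <;>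
          simp only [m1, m2, if_true, if_false] at d1 cl ⊢
        · left
          exact ⟨by linarith, trivial⟩
        · right
          have hf : ε k = false := by
            cases hε : ε k <;> simp_all
          have := down hf
          linarith
        · right
          have ht : ε k = true := by
            cases hε : ε k <;> simp_all
          have := up ht
          linarith
        · left
          exact ⟨by linarith, trivial⟩
      rcases step with ⟨s1, s2⟩ | s
      · rw [s1]
        refine ⟨ih1, fun h0 z h1 h2 => ?_⟩
        rcases Nat.lt_or_ge (z : ℕ) (k + 1) with hz | hz
        · rw [ih2 h0 z h1 (by omega), s2]
        · rw [show z = ⟨k + 1, hk⟩ from Fin.ext (by simp; omega)]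
      · exact ⟨by linarith, fun h0 => by linarith⟩
  obtain ⟨m1, m2⟩ := main b b.2 hab le_rfl
  have hsum : H b = ∑ z ∈ S, e z := by
    have hI := prefixSum_add_sum_Icc d a b (by rw [Fin.le_def] at hab; omega)
    have hI2 : ∑ z ∈ Finset.Icc a b, d z = ∑ z ∈ S, e z := by
      rw [hd, ← Finset.sum_filter, Finset.filter_mem_eq_inter, Finset.inter_eq_right.2 hS]
    simp only [H, hend, sub_self, ite_self]
    linarith
  change H b ≤ 0 at m1
  change H b = 0 → ∀ z : Fin n, a ≤ z → z ≤ b → (z ∈ S ↔ b ∈ S) at m2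
  rw [hsum] at m1 m2
  refine lt_of_le_of_ne m1 fun h0 => ?_
  obtain ⟨z, hz⟩ := hne
  have hz' := Finset.mem_Icc.1 (hS hz)
  have hb := (m2 h0 z hz'.1 hz'.2).1 hz
  refine hST (Finset.Subset.antisymm hS fun y hy => ?_)
  rw [Finset.mem_Icc] at hy
  exact (m2 h0 y hy.1 hy.2).2 hb

lemma totallyStable_of_chains {n : ℕ} (hn : 0 < n) (ε : ℕ → Bool) (w r : Fin n → ℝ)
    (hr : ∀ i, 0 < r i) (h : Chains ε w r) : TotallyStable ε w r := by
  rintro T S ⟨a, b, rfl⟩ hST hne hneq hcl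
  have hT : (Finset.Icc a b).Nonempty := hne.mono hST
  have hab : a ≤ b := Finset.nonempty_Icc.1 hT
  rw [muSlope_lt_iff hr hne]
  set t := muSlope w r (Finset.Icc a b) with ht
  have hend : prefixSum (fun z => w z - t * r z) (b + 1)
      = prefixSum (fun z => w z - t * r z) a := by
    rw [← prefixSum_add_sum_Icc _ a b (by rw [Fin.le_def] at hab; omega), ht,
      sum_sub_muSlope hr hT, add_zero]
  refine sum_neg_of_succClosed ε _ a b hab S hST hne hneq hcl hend ?_ ?_
  · exact prefixSum_pos_of_upper hn ε w r hr h t a b hend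
  · intro c hac hcb hc
    have := prefixSum_pos_of_upper hn _ _ r hr h.not (-t) a b
      (by simp only [prefixSum_neg, hend]) c hac hcb (by simp [hc])
    simp only [prefixSum_neg] at this
    linarith

/-! ### Unions of consecutive blocks -/

lemma isInterval_of_monotone {n : ℕ} {g : ℕ → ℕ} (hg : Monotone g) (k : ℕ) (T : Finset (Fin n))
    (hT : ∀ z : Fin n, z ∈ T ↔ g z = k ∨ g z = k + 1) (hne : T.Nonempty) : IsInterval T := by
  refine ⟨T.min' hne, T.max' hne, Finset.Subset.antisymm (fun z hz => ?_) fun z hz => ?_⟩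
  · exact Finset.mem_Icc.2 ⟨T.min'_le z hz, T.le_max' z hz⟩
  · rw [Finset.mem_Icc] at hz
    have h1 := hg (show ((T.min' hne : Fin n) : ℕ) ≤ z from hz.1)
    have h2 := hg (show (z : ℕ) ≤ (T.max' hne : Fin n) from hz.2)
    have h3 := (hT _).1 (T.min'_mem hne)
    have h4 := (hT _).1 (T.max'_mem hne)
    rw [hT]
    omega

lemma chains_of_totallyStable {n : ℕ} (hn : 0 < n) (ε : ℕ → Bool) (w r : Fin n → ℝ)
    (hr : ∀ i, 0 < r i) (h : TotallyStable ε w r) : Chains ε w r := by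
  constructor
  · intro k hk
    have hA : (Xset ε (k + 1) : Finset (Fin n)).Nonempty := Xset_nonempty hn ε _ hk
    have hB : (Xset ε k : Finset (Fin n)).Nonempty := Xset_nonempty hn ε _ hk.le
    have hd : Disjoint (Xset ε (k + 1) : Finset (Fin n)) (Xset ε k) := by
      rw [Finset.disjoint_left]
      intro z
      simp only [Xset, Finset.mem_filter, Finset.mem_univ, true_and]
      omega
    refine muSlope_lt_of_lt_union hr hA hB hd (h _ _ ?_ Finset.subset_union_left hA ?_ ?_)
    · refine isInterval_of_monotone (xc_mono ε) k _ (fun z => ?_)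
        (hA.mono Finset.subset_union_left)
      simp [Xset, or_comm]
    · intro heq
      obtain ⟨z, hz⟩ := hB
      exact Finset.disjoint_left.1 hd (heq ▸ Finset.mem_union_right _ hz) hz
    · intro i j hi hj hij
      have := xc_succ ε i
      rw [← hij] at this
      simp only [Xset, Finset.mem_union, Finset.mem_filter, Finset.mem_univ, true_and] at hi hj ⊢
      constructor <;> intro hε hm <;> simp [hε] at this <;> omega
  · intro k hk
    have hA : (Yset ε k : Finset (Fin n)).Nonempty := Yset_nonempty hn ε _ hk.le
    have hB : (Yset ε (k + 1) : Finset (Fin n)).Nonempty := Yset_nonempty hn ε _ hk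
    have hd : Disjoint (Yset ε k : Finset (Fin n)) (Yset ε (k + 1)) := by
      rw [Finset.disjoint_left]
      intro z
      simp only [Yset, Finset.mem_filter, Finset.mem_univ, true_and]
      omega
    refine muSlope_lt_of_lt_union hr hA hB hd (h _ _ ?_ Finset.subset_union_left hA ?_ ?_)
    · refine isInterval_of_monotone (yc_mono ε) k _ (fun z => ?_)
        (hA.mono Finset.subset_union_left)
      simp [Yset]
    · intro heq
      obtain ⟨z, hz⟩ := hB
      exact Finset.disjoint_left.1 hd (heq ▸ Finset.mem_union_right _ hz) hz
    · intro i j hi hj hij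
      have := yc_succ ε i
      rw [← hij] at this
      simp only [Yset, Finset.mem_union, Finset.mem_filter, Finset.mem_univ, true_and] at hi hj ⊢
      constructor <;> intro hε hm <;> simp [hε] at this <;> omega

/-- `(w,r)` is totally stable iff the `n-1` inequalities
`μ(X_0) > μ(X_1) > ⋯ > μ(X_{x(n)})` and `μ(Y_0) < μ(Y_1) < ⋯ < μ(Y_{y(n)})` hold. -/
theorem totally_stable_iff_chain_inequalities
    (n : ℕ) (hn : 0 < n) (ε : ℕ → Bool) (w r : Fin n → ℝ) (hr : ∀ i, 0 < r i) :
    TotallyStable ε w r ↔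
      ((∀ k, k < xc ε (n - 1) → muSlope w r (Xset ε (k + 1)) < muSlope w r (Xset ε k)) ∧
       (∀ l, l < yc ε (n - 1) → muSlope w r (Yset ε l) < muSlope w r (Yset ε (l + 1)))) :=
  ⟨chains_of_totallyStable hn ε w r hr, totallyStable_of_chains hn ε w r hr⟩
end

section
/- For every orientation ε of the type A_n quiver and every r ∈ (ℝ_{>0})^n, there exists w ∈ ℝ^n such that (w,r) is totally stable; i.e. the projection TS(ε) → (ℝ_{>0})^n sending (w,r) to r is surjective. In particular TS(ε) is nonempty. -/
/-!
Put `P_m = (X_m, y_m)`, `0 ≤ m ≤ n`, where `X_m` is the sum of the first `m` entries of `r`, and let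
`w z = y_{z+1} - y_z`. The slope of the interval `{a,…,b}` is then the slope of the chord
`P_a P_{b+1}`. The heights are chosen so that all `P_m` lie on the boundary of the convex region
`|y| ≤ x (L - x)`, `L = X_n`: on the upper arc if the arrow `m-1, m` points right, on the lower arc
if it points left. Hence every `P_m` with `a < m ≤ b` lies strictly above, respectively strictly
below, the chord `P_a P_{b+1}` (`above_chord`).

Let `g m` be the signed height of `P_m` over that chord. For `S ⊆ T = {a,…,b}` the difference
`w(S) - μ(T) r(S)` equals `∑_{z ∈ S} (g (z+1) - g z)`. As `g` vanishes at both ends, summation by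
parts turns this into a sum of terms `(χ_S m - χ_S (m+1)) g (m+1)`, all of which are nonpositive
when `S` is successor-closed; one of them is nonzero when `S` is nonempty and proper
(`sum_indicator_neg`).
-/

open Finset

/-- Strict concavity of the arc: for `A < c < B` the point `(c, c (L - c))` lies strictly above the
chord joining points `(A, u)` and `(B, v)` of the region `y ≤ x (L - x)`. -/
lemma above_chord {A c B L u v : ℝ} (hA : A < c) (hB : c < B)
    (hu : u ≤ A * (L - A)) (hv : v ≤ B * (L - B)) :
    u + (v - u) / (B - A) * (c - A) < c * (L - c) := by
  have hAB : 0 < B - A := by linarith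
  have e : u + (v - u) / (B - A) * (c - A) = (u * (B - c) + v * (c - A)) / (B - A) := by
    field_simp
    ring
  rw [e, div_lt_iff₀ hAB]
  have h1 := mul_le_mul_of_nonneg_right hu (by linarith : 0 ≤ B - c)
  have h2 := mul_le_mul_of_nonneg_right hv (by linarith : 0 ≤ c - A)
  have h3 : 0 < (c - A) * (B - c) * (B - A) :=
    mul_pos (mul_pos (by linarith) (by linarith)) hAB
  nlinarith

lemma sum_by_parts_Ico (χ g : ℕ → ℝ) (a b : ℕ) (hab : a ≤ b) :
    ∑ m ∈ Finset.Ico a (b + 1), χ m * (g (m + 1) - g m) =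
      χ b * g (b + 1) - χ a * g a + ∑ m ∈ Finset.Ico a b, (χ m - χ (m + 1)) * g (m + 1) := by
  induction b, hab using Nat.le_induction with
  | base => simp; ring
  | succ b hab ih =>
    rw [Finset.sum_Ico_succ_top (by omega), ih, Finset.sum_Ico_succ_top hab]
    ring

/-- Here `P m` says that the vertex `m` lies in the successor-closed set, and `g` is the height
over a chord: it vanishes at both ends, and its sign in between is dictated by the orientation. -/
lemma sum_indicator_neg (ε : ℕ → Bool) (P : ℕ → Prop) [DecidablePred P] (g : ℕ → ℝ) (a b : ℕ)
    (hab : a ≤ b) (ga : g a = 0) (gb : g (b + 1) = 0)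
    (gt : ∀ m, a ≤ m → m < b → ε m = true → 0 < g (m + 1))
    (gf : ∀ m, a ≤ m → m < b → ε m = false → g (m + 1) < 0)
    (Pt : ∀ m, a ≤ m → m < b → ε m = true → P m → P (m + 1))
    (Pf : ∀ m, a ≤ m → m < b → ε m = false → P (m + 1) → P m)
    (hex : ∃ m, a ≤ m ∧ m ≤ b ∧ P m) (hnex : ∃ m, a ≤ m ∧ m ≤ b ∧ ¬ P m) :
    ∑ m ∈ Finset.Ico a (b + 1), (if P m then (1 : ℝ) else 0) * (g (m + 1) - g m) < 0 := by
  rw [sum_by_parts_Ico (fun m => if P m then (1 : ℝ) else 0) g a b hab, ga, gb]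
  simp only [mul_zero, sub_zero, zero_add]
  -- each term is nonpositive, and it is negative where membership changes
  have key : ∀ m, a ≤ m → m < b →
      ((if P m then (1 : ℝ) else 0) - (if P (m + 1) then 1 else 0)) * g (m + 1) ≤ 0 ∧
      (¬ (P m ↔ P (m + 1)) →
        ((if P m then (1 : ℝ) else 0) - (if P (m + 1) then 1 else 0)) * g (m + 1) < 0) := by
    intro m h1 h2
    have := gt m h1 h2
    have := gf m h1 h2
    have := Pt m h1 h2
    have := Pf m h1 h2
    clear gt gf Pt Pf hex hnex
    cases h : ε m <;> by_cases p : P m <;> by_cases q : P (m + 1) <;> simp_all <;> linarith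
  have hch : ∃ m, a ≤ m ∧ m < b ∧ ¬ (P m ↔ P (m + 1)) := by
    by_contra! hc
    have hall : ∀ m, a ≤ m → m ≤ b → (P m ↔ P a) := by
      intro m hm
      induction m, hm using Nat.le_induction with
      | base => simp
      | succ m hm ih =>
        intro hmb
        rw [← hc m hm (by omega)]
        exact ih (by omega)
    obtain ⟨m, h1, h2, h3⟩ := hex
    obtain ⟨k, k1, k2, k3⟩ := hnex
    exact k3 ((hall k k1 k2).2 ((hall m h1 h2).1 h3))
  obtain ⟨m, h1, h2, h3⟩ := hch
  refine Finset.sum_neg' (fun i hi => ?_) ⟨m, Finset.mem_Ico.2 ⟨h1, h2⟩, (key m h1 h2).2 h3⟩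
  exact (key i (Finset.mem_Ico.1 hi).1 (Finset.mem_Ico.1 hi).2).1

lemma sum_fin_eq_sum_Ico {n : ℕ} (a b : Fin n) (S : Finset (Fin n)) (hS : S ⊆ Finset.Icc a b)
    [DecidablePred fun m : ℕ => ∃ z ∈ S, (z : ℕ) = m] (h : ℕ → ℝ) :
    ∑ z ∈ S, h z =
      ∑ m ∈ Finset.Ico (a : ℕ) (b + 1),
        (if ∃ z ∈ S, (z : ℕ) = m then (1 : ℝ) else 0) * h m := by
  simp only [ite_mul, one_mul, zero_mul]
  rw [← Finset.sum_filter]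
  refine Finset.sum_bij (fun z _ => (z : ℕ)) ?_ ?_ ?_ ?_
  · intro z hz
    have := Finset.mem_Icc.1 (hS hz)
    rw [Fin.le_def, Fin.le_def] at this
    simp only [Finset.mem_filter, Finset.mem_Ico]
    exact ⟨by omega, z, hz, rfl⟩
  · intro x _ y _ hxy
    exact Fin.ext hxy
  · intro m hm
    obtain ⟨z, hz, e⟩ := (Finset.mem_filter.1 hm).2
    exact ⟨z, hz, e⟩
  · intros
    rfl

lemma sum_Icc_fin_sub {n : ℕ} (a b : Fin n) (hab : a ≤ b) (F : ℕ → ℝ) :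
    ∑ z ∈ Finset.Icc a b, (F ((z : ℕ) + 1) - F z) = F (b + 1) - F a := by
  classical
  rw [Fin.le_def] at hab
  rw [sum_fin_eq_sum_Ico a b _ subset_rfl (fun m => F (m + 1) - F m),
    ← Finset.sum_Ico_sub F (by omega : (a : ℕ) ≤ b + 1)]
  refine Finset.sum_congr rfl fun m hm => ?_
  rw [Finset.mem_Ico] at hm
  rw [if_pos ⟨⟨m, by omega⟩, by simp only [Finset.mem_Icc, Fin.le_def]; omega, rfl⟩, one_mul]

/-- The horizontal coordinate of `P_m`: the sum of the first `m` entries of `r`, continued by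
steps of length `1` beyond `n`. -/
noncomputable def baseCoord {n : ℕ} (r : Fin n → ℝ) (m : ℕ) : ℝ :=
  ∑ i ∈ Finset.range m, if h : i < n then r ⟨i, h⟩ else 1

/-- The height of `P_m`: on the upper arc `x (L - x)` if the arrow joining the vertices `m - 1` and
`m` points right, on the lower arc otherwise. -/
noncomputable def arcHeight {n : ℕ} (ε : ℕ → Bool) (r : Fin n → ℝ) : ℕ → ℝ
  | 0 => 0
  | m + 1 => (if ε m = true then 1 else -1) *
      (baseCoord r (m + 1) * (baseCoord r n - baseCoord r (m + 1)))

lemma baseCoord_strictMono {n : ℕ} (r : Fin n → ℝ) (hr : ∀ i, 0 < r i) :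
    StrictMono (baseCoord r) := by
  refine strictMono_nat_of_lt_succ fun m => ?_
  unfold baseCoord
  rw [Finset.sum_range_succ]
  split_ifs with h
  · linarith [hr ⟨m, h⟩]
  · linarith

lemma baseCoord_succ_sub {n : ℕ} (r : Fin n → ℝ) (z : Fin n) :
    baseCoord r ((z : ℕ) + 1) - baseCoord r z = r z := by
  simp [baseCoord, Finset.sum_range_succ]

lemma abs_arcHeight_le {n : ℕ} (ε : ℕ → Bool) (r : Fin n → ℝ) (hr : ∀ i, 0 < r i) (m : ℕ)
    (hm : m ≤ n) :
    |arcHeight ε r m| ≤ baseCoord r m * (baseCoord r n - baseCoord r m) := by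
  have h0 : 0 ≤ baseCoord r m := by
    have := (baseCoord_strictMono r hr).monotone (Nat.zero_le m)
    simpa [baseCoord] using this
  have h1 := (baseCoord_strictMono r hr).monotone hm
  have h2 : 0 ≤ baseCoord r m * (baseCoord r n - baseCoord r m) :=
    mul_nonneg h0 (by linarith)
  cases m with
  | zero => simpa [arcHeight] using h2
  | succ m =>
    rw [arcHeight, abs_mul, abs_of_nonneg h2]
    split_ifs <;> simp

/-- for every orientation `ε` and every `r ∈ (ℝ_{>0})^n` there exists `w`
with `(w,r)` totally stable; i.e. the projection `TS(ε) → (ℝ_{>0})^n` is surjective,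
and in particular `TS(ε)` is nonempty. -/
theorem exists_totally_stable (n : ℕ) (hn : 0 < n) (ε : ℕ → Bool)
    (r : Fin n → ℝ) (hr : ∀ i, 0 < r i) :
    ∃ w : Fin n → ℝ, TotallyStable ε w r := by
  classical
  have hmono := baseCoord_strictMono r hr
  refine ⟨fun z => arcHeight ε r ((z : ℕ) + 1) - arcHeight ε r z, ?_⟩
  rintro T S ⟨a, b, rfl⟩ hST hne hneT hS
  obtain ⟨z₀, hz₀⟩ := hne
  have hz₀' := Finset.mem_Icc.1 (hST hz₀)
  have hab : a ≤ b := hz₀'.1.trans hz₀'.2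
  have habN : (a : ℕ) ≤ b := hab
  have hbn := b.isLt
  set X := baseCoord r with hX
  set y := arcHeight ε r with hy
  have hrS : 0 < ∑ z ∈ S, r z := Finset.sum_pos (fun i _ => hr i) ⟨z₀, hz₀⟩
  have hT : muSlope (fun z : Fin n => y ((z : ℕ) + 1) - y z) r (Finset.Icc a b) =
      (y (b + 1) - y a) / (X (b + 1) - X a) := by
    unfold muSlope
    rw [sum_Icc_fin_sub a b hab y, ← sum_Icc_fin_sub a b hab X]
    simp only [hX, baseCoord_succ_sub]
  rw [hT]
  set μ := (y (b + 1) - y a) / (X (b + 1) - X a) with hμ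
  unfold muSlope
  rw [div_lt_iff₀ hrS, ← sub_neg, Finset.mul_sum, ← Finset.sum_sub_distrib]
  -- the signed height over the chord from `P_a` to `P_{b+1}`
  let g : ℕ → ℝ := fun m => y m - (y a + μ * (X m - X a))
  have hsum : ∑ z ∈ S, ((y ((z : ℕ) + 1) - y z) - μ * r z) =
      ∑ z ∈ S, (g ((z : ℕ) + 1) - g z) := by
    refine Finset.sum_congr rfl fun z _ => ?_
    rw [← baseCoord_succ_sub r z]
    simp only [g, hX]
    ring
  rw [hsum, sum_fin_eq_sum_Ico a b S hST (fun m => g (m + 1) - g m)]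
  have hXab : 0 < X (b + 1) - X a := sub_pos.2 (hmono (by omega))
  have hya := abs_le.1 (abs_arcHeight_le ε r hr a (by omega))
  have hyb := abs_le.1 (abs_arcHeight_le ε r hr (b + 1) (by omega))
  have hsc : ∀ m (h1 : (a : ℕ) ≤ m) (h2 : m < b),
      _ := fun m h1 h2 => hS ⟨m, by omega⟩ ⟨m + 1, by omega⟩
        (by simp only [Finset.mem_Icc, Fin.le_def]; omega)
        (by simp only [Finset.mem_Icc, Fin.le_def]; omega) rfl
  refine sum_indicator_neg ε (fun m => ∃ z ∈ S, (z : ℕ) = m) g a b habN ?_ ?_ ?_ ?_ ?_ ?_ ?_ ?_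
  · simp [g]
  · simp only [g, hμ]
    rw [div_mul_cancel₀ _ hXab.ne']
    ring
  · intro m h1 h2 he
    have := above_chord (hmono (by omega : (a : ℕ) < m + 1)) (hmono (by omega : m + 1 < (b : ℕ) + 1))
      hya.2 hyb.2
    have e : y (m + 1) = X (m + 1) * (X n - X (m + 1)) := by simp [hy, arcHeight, he, hX]
    simp only [g, e]
    linarith
  · intro m h1 h2 he
    -- reflect in the horizontal axis
    have := above_chord (hmono (by omega : (a : ℕ) < m + 1)) (hmono (by omega : m + 1 < (b : ℕ) + 1))
      (neg_le.1 hya.1) (neg_le.1 hyb.1)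
    have e : y (m + 1) = - (X (m + 1) * (X n - X (m + 1))) := by simp [hy, arcHeight, he, hX]
    have e2 : (-y (b + 1) - -y a) / (X (b + 1) - X a) = -μ := by
      rw [hμ, ← neg_div]
      congr 1
      ring
    rw [e2] at this
    simp only [g, e]
    linarith
  · rintro m h1 h2 he ⟨z, hz, rfl⟩
    exact ⟨_, (hsc z h1 h2).1 he hz, rfl⟩
  · rintro m h1 h2 he ⟨z, hz, hzm⟩
    have hz' : z = ⟨m + 1, by omega⟩ := Fin.ext hzm
    exact ⟨_, (hsc m h1 h2).2 he (hz' ▸ hz), rfl⟩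
  · exact ⟨z₀, hz₀'.1, hz₀'.2, z₀, hz₀, rfl⟩
  · obtain ⟨z, hzT, hzS⟩ := Finset.exists_of_ssubset (hST.ssubset_of_ne hneT)
    have hz := Finset.mem_Icc.1 hzT
    refine ⟨z, hz.1, hz.2, ?_⟩
    rintro ⟨z', hz', e⟩
    exact hzS (Fin.ext e ▸ hz')
end

section
/- For every orientation ε of the type A_n quiver and every r ∈ (ℝ_{>0})^n, the fiber TS_r(ε) = {w ∈ ℝ^n : (w,r) ∈ TS(ε)} is linearly equivalent to ℝ × (ℝ_{>0})^{n−1}: there exists a linear automorphism L of ℝ^n such that L maps the set {v ∈ ℝ^n : v_2 > 0, …, v_n > 0} bijectively onto TS_r(ε). -/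
/-!
Write `p k` and `t k` for the sums of `w` and `r` over the first `k` vertices, and consider the
points `P_k = (t k, p k)` for `0 ≤ k ≤ n`. The slope of an interval of vertices is the slope of a
chord of this broken line, and total stability says that for `0 < c < n` the point `P_c` lies
strictly above every chord `P_a P_b` with `a < c < b` if the arrow between the vertices `c - 1` and
`c` (counted from `0`) points to the right, and strictly below if it points to the left
(`totallyStable_iff`; arbitrary successor-closed subsets are handled by summation by parts).

Equivalently, the points form a convex polygon: the upper points together with `P_0` and `P_n`
form a strictly concave chain, and the lower points together with `P_0` and `P_n` a strictly
convex chain. This needs only one inequality for each `c`, between the neighbours of `c` in its own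
chain, because a strictly concave chain has a supporting line at each interior point, and `P_0`
and `P_n` being below this line forces the convex chain below it as well (`cut_of_cone`). So the
fiber is cut out by `n - 1` linear inequalities. Together with `w ↦ p n` these `n - 1` linear
functionals form an injective endomorphism of `ℝ^n` (when all of them vanish, both chains are
straight and lie on the axis, so `p = 0`); its inverse is the required automorphism.
-/

open Finset

/-! ### Concave chains of points -/

/-- `j` and `k` are consecutive elements of `C`, in this order. -/
def Consec {ι : Type*} [LinearOrder ι] (C : Finset ι) (j k : ι) : Prop :=
  j ∈ C ∧ k ∈ C ∧ j < k ∧ ∀ i ∈ C, j < i → k ≤ i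

lemma exists_consec_right {ι : Type*} [LinearOrder ι] {C : Finset ι} {c d : ι}
    (hc : c ∈ C) (hd : d ∈ C) (h : c < d) : ∃ k, Consec C c k := by
  have hne : (C.filter (fun i => c < i)).Nonempty := ⟨d, by simp [hd, h]⟩
  obtain ⟨k, hk, hmin⟩ := Finset.exists_min_image _ id hne
  simp only [Finset.mem_filter, id] at hk hmin
  exact ⟨k, hc, hk.1, hk.2, fun i hi hci => hmin i ⟨hi, hci⟩⟩

lemma exists_consec_left {ι : Type*} [LinearOrder ι] {C : Finset ι} {c d : ι}
    (hc : c ∈ C) (hd : d ∈ C) (h : d < c) : ∃ k, Consec C k c ∧ d ≤ k := by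
  have hne : (C.filter (fun i => i < c)).Nonempty := ⟨d, by simp [hd, h]⟩
  obtain ⟨k, hk, hmax⟩ := Finset.exists_max_image _ id hne
  simp only [Finset.mem_filter, id] at hk hmax
  refine ⟨k, ⟨hk.1, hc, hk.2, fun i hi hki => ?_⟩, hmax d ⟨hd, h⟩⟩
  by_contra hlt
  exact absurd (hmax i ⟨hi, not_le.mp hlt⟩) (not_le.mpr hki)

lemma Consec.left_unique {ι : Type*} [LinearOrder ι] {C : Finset ι} {i i' j : ι}
    (h : Consec C i j) (h' : Consec C i' j) : i = i' := by
  rcases lt_trichotomy i i' with hl | hl | hl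
  · exact absurd (h.2.2.2 i' h'.1 hl) (not_le.mpr h'.2.2.1)
  · exact hl
  · exact absurd (h'.2.2.2 i h.1 hl) (not_le.mpr h.2.2.1)

lemma Consec.right_unique {ι : Type*} [LinearOrder ι] {C : Finset ι} {j k k' : ι}
    (h : Consec C j k) (h' : Consec C j k') : k = k' :=
  le_antisymm (h.2.2.2 k' h'.2.1 h'.2.2.1) (h'.2.2.2 k h.2.1 h.2.2.1)

/-- To the right of `c`, a concave chain stays below any line through the point at `c` that lies
above the next point. Concavity is only assumed at consecutive triples. -/
lemma below_right {ι : Type*} [LinearOrder ι] (C : Finset ι) (t p : ι → ℝ)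
    (ht : ∀ j ∈ C, ∀ k ∈ C, j < k → t j < t k)
    (h : ∀ i j k, Consec C i j → Consec C j k →
      (p k - p j) * (t j - t i) ≤ (p j - p i) * (t k - t j))
    (c : ι) (hc : c ∈ C) (m : ℝ)
    (hm : ∀ k, Consec C c k → p k - p c ≤ m * (t k - t c)) :
    ∀ k ∈ C, c ≤ k → p k - p c ≤ m * (t k - t c) := by
  -- the bound on the last step is carried along as well, since concavity passes on step slopes
  suffices key : ∀ k ∈ C, c ≤ k → p k - p c ≤ m * (t k - t c) ∧
      ∀ j, Consec C j k → c ≤ j → p k - p j ≤ m * (t k - t j) from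
    fun k hk hck => (key k hk hck).1
  classical
  by_contra hcon
  push Not at hcon
  obtain ⟨k₀, hk₀, hck₀, hbad₀⟩ := hcon
  have hne : (C.filter (fun k => c ≤ k ∧ ¬ (p k - p c ≤ m * (t k - t c) ∧
      ∀ j, Consec C j k → c ≤ j → p k - p j ≤ m * (t k - t j)))).Nonempty := by
    refine ⟨k₀, ?_⟩
    simp only [Finset.mem_filter]
    refine ⟨hk₀, hck₀, ?_⟩
    rintro ⟨h1, h2⟩
    obtain ⟨j, hj1, hj2, hj3⟩ := hbad₀ h1
    exact absurd (h2 j hj1 hj2) (not_le.mpr hj3)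
  obtain ⟨k, hk, hmin⟩ := Finset.exists_min_image _ id hne
  simp only [Finset.mem_filter, id] at hk hmin
  obtain ⟨hkC, hck, hbad⟩ := hk
  have IH : ∀ j ∈ C, c ≤ j → j < k → p j - p c ≤ m * (t j - t c) ∧
      ∀ i, Consec C i j → c ≤ i → p j - p i ≤ m * (t j - t i) := by
    intro j hj hcj hjk
    by_contra hb
    exact absurd (hmin j ⟨hj, hcj, hb⟩) (not_le.mpr hjk)
  apply hbad
  have step : ∀ j, Consec C j k → c ≤ j → p k - p j ≤ m * (t k - t j) := by
    intro j hjk hcj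
    rcases hcj.eq_or_lt with rfl | hlt
    · exact hm k hjk
    · obtain ⟨i, hij, hci⟩ := exists_consec_left hjk.1 hc hlt
      have h1 := (IH j hjk.1 hcj hjk.2.2.1).2 i hij hci
      have h2 := h i j k hij hjk
      have h3 := ht i hij.1 j hjk.1 hij.2.2.1
      have h4 := ht j hjk.1 k hkC hjk.2.2.1
      have h5 := mul_le_mul_of_nonneg_right h1 (sub_nonneg.mpr h4.le)
      have h6 : (p k - p j) * (t j - t i) ≤ (m * (t k - t j)) * (t j - t i) := by linarith
      exact le_of_mul_le_mul_right h6 (sub_pos.mpr h3)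
  refine ⟨?_, step⟩
  rcases hck.eq_or_lt with rfl | hlt
  · simp
  · obtain ⟨j, hjk, hcj⟩ := exists_consec_left hkC hc hlt
    have h1 := step j hjk hcj
    have h2 := (IH j hjk.1 hcj hjk.2.2.1).1
    linarith

lemma consec_dual {ι : Type*} [LinearOrder ι] {C : Finset ι} {j k : ι}
    (h : Consec (ι := ιᵒᵈ) C j k) : Consec (ι := ι) C k j := by
  obtain ⟨hj, hk, hlt, hmin⟩ := h
  refine ⟨hk, hj, hlt, fun i hi hki => ?_⟩
  by_contra hlt'
  exact absurd (show i ≤ k from hmin i hi (not_le.mp hlt')) (not_le.mpr hki)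

/-- The mirror image of `below_right`, obtained by reversing the order. -/
lemma below_left {ι : Type*} [LinearOrder ι] (C : Finset ι) (t p : ι → ℝ)
    (ht : ∀ j ∈ C, ∀ k ∈ C, j < k → t j < t k)
    (h : ∀ i j k, Consec C i j → Consec C j k →
      (p k - p j) * (t j - t i) ≤ (p j - p i) * (t k - t j))
    (c : ι) (hc : c ∈ C) (m : ℝ)
    (hm : ∀ k, Consec C k c → p k - p c ≤ m * (t k - t c)) :
    ∀ k ∈ C, k ≤ c → p k - p c ≤ m * (t k - t c) := by
  intro k hk hkc
  have := below_right (ι := ιᵒᵈ) C (fun i => - t i) p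
    (fun j hj k hk hjk => neg_lt_neg (ht k hk j hj hjk))
    (fun i j k hij hjk => by
      have := h k j i (consec_dual hjk) (consec_dual hij)
      linarith) c hc (-m)
    (fun k hk => by
      have := hm k (consec_dual hk)
      linarith) k hk hkc
  linarith

/-- A strictly concave chain has, at each interior point, a line through that point with all its
other points strictly below. -/
lemma exists_support {ι : Type*} [LinearOrder ι] (C : Finset ι) (t p : ι → ℝ)
    (ht : ∀ j ∈ C, ∀ k ∈ C, j < k → t j < t k)
    (h : ∀ i j k, Consec C i j → Consec C j k →
      (p k - p j) * (t j - t i) < (p j - p i) * (t k - t j))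
    {a c b : ι} (ha : a ∈ C) (hc : c ∈ C) (hb : b ∈ C) (hac : a < c) (hcb : c < b) :
    ∃ m : ℝ, ∀ l ∈ C, l ≠ c → p l - p c < m * (t l - t c) := by
  obtain ⟨i, hi, -⟩ := exists_consec_left hc ha hac
  obtain ⟨k, hk⟩ := exists_consec_right hc hb hcb
  have h1 := sub_pos.mpr (ht i hi.1 c hc hi.2.2.1)
  have h2 := sub_pos.mpr (ht c hc k hk.2.1 hk.2.2.1)
  have hlt : (p k - p c) / (t k - t c) < (p c - p i) / (t c - t i) := by
    rw [div_lt_div_iff₀ h2 h1]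
    exact h i c k hi hk
  obtain ⟨m, hm1, hm2⟩ := exists_between hlt
  have hweak := fun i j k hij hjk => (h i j k hij hjk).le
  have hR := below_right C t p ht hweak c hc _ (fun k' hk' => by
    obtain rfl := hk.right_unique hk'
    exact (div_mul_cancel₀ _ h2.ne').ge)
  have hL := below_left C t p ht hweak c hc ((p c - p i) / (t c - t i)) (fun i' hi' => by
    obtain rfl := hi.left_unique hi'
    have := div_mul_cancel₀ (p c - p i) h1.ne'
    linarith)
  refine ⟨m, fun l hl hlc => ?_⟩
  rcases lt_or_gt_of_ne hlc with hlt' | hlt'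
  · refine (hL l hl hlt'.le).trans_lt (mul_lt_mul_of_neg_right hm2 ?_)
    linarith [ht l hl c hc hlt']
  · refine (hR l hl hlt'.le).trans_lt (mul_lt_mul_of_pos_right hm1 ?_)
    linarith [ht c hc l hl hlt']

lemma above_chord_s3 {ta tc tb pa pc pb m : ℝ} (hac : ta < tc) (hcb : tc < tb)
    (ha : pa - pc < m * (ta - tc)) (hb : pb - pc < m * (tb - tc)) :
    (pb - pc) * (tc - ta) < (pc - pa) * (tb - tc) := by
  have h1 := mul_lt_mul_of_pos_right hb (sub_pos.mpr hac)
  have h2 := mul_lt_mul_of_pos_right ha (sub_pos.mpr hcb)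
  linarith

/-- If the points split into a strictly concave chain `C` and a strictly convex chain `D` with
common end points `0` and `n`, then each interior point of `C` lies above all chords over it. -/
lemma chord_of_chains (n : ℕ) (C D : Finset ℕ) (t p : ℕ → ℝ)
    (ht : ∀ j k, j < k → k ≤ n → t j < t k)
    (hCn : ∀ k ∈ C, k ≤ n) (hDn : ∀ k ∈ D, k ≤ n) (hCD : ∀ k ≤ n, k ∈ C ∨ k ∈ D)
    (hC0 : 0 ∈ C) (hCl : n ∈ C) (hD0 : 0 ∈ D) (hDl : n ∈ D)
    (hC : ∀ i j k, Consec C i j → Consec C j k →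
      (p k - p j) * (t j - t i) < (p j - p i) * (t k - t j))
    (hD : ∀ i j k, Consec D i j → Consec D j k →
      (-p k - -p j) * (t j - t i) < (-p j - -p i) * (t k - t j))
    {a c b : ℕ} (hc : c ∈ C) (hac : a < c) (hcb : c < b) (hb : b ≤ n) :
    (p b - p c) * (t c - t a) < (p c - p a) * (t b - t c) := by
  have h0c : 0 < c := by omega
  have hcn : c < n := by omega
  obtain ⟨m, hm⟩ := exists_support C t p (fun j _ k hk hjk => ht j k hjk (hCn k hk)) hC
    hC0 hc hCl h0c hcn
  have hall : ∀ k ≤ n, k ≠ c → p k - p c < m * (t k - t c) := by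
    intro k hk hkc
    rcases hCD k hk with hkC | hkD
    · exact hm k hkC hkc
    · rcases Nat.eq_zero_or_pos k with rfl | hk0
      · exact hm 0 hC0 hkc
      rcases hk.eq_or_lt with rfl | hkn
      · exact hm k hCl hkc
      obtain ⟨m', hm'⟩ := exists_support D t (fun k => - p k)
        (fun j _ k hk hjk => ht j k hjk (hDn k hk)) hD hD0 hkD hDl hk0 hkn
      have h1 := hm 0 hC0 h0c.ne
      have h2 := hm n hCl hcn.ne'
      have t1 := ht 0 k hk0 hk
      have t2 := ht k n hkn le_rfl
      have h3 := above_chord_s3 t1 t2 (hm' 0 hD0 hk0.ne) (hm' n hDl hkn.ne')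
      have h4 := mul_lt_mul_of_pos_right h1 (sub_pos.mpr t2)
      have h5 := mul_lt_mul_of_pos_right h2 (sub_pos.mpr t1)
      have h6 : (p k - p c) * (t n - t 0) < (m * (t k - t c)) * (t n - t 0) := by
        linarith
      exact lt_of_mul_lt_mul_right h6 (by linarith)
  exact above_chord_s3 (ht a c hac hcn.le) (ht c b hcb hb) (hall a (by omega) hac.ne)
    (hall b hb hcb.ne')

/-- A chain starting and ending on the axis, with all consecutive triples collinear, lies on
the axis. -/
lemma eq_zero_of_flat (n : ℕ) (hn : 0 < n) (C : Finset ℕ) (t p : ℕ → ℝ)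
    (ht : ∀ j k, j < k → k ≤ n → t j < t k)
    (hCn : ∀ k ∈ C, k ≤ n) (hC0 : 0 ∈ C) (hCl : n ∈ C) (hp0 : p 0 = 0) (hpn : p n = 0)
    (h : ∀ i j k, Consec C i j → Consec C j k →
      (p k - p j) * (t j - t i) = (p j - p i) * (t k - t j)) :
    ∀ k ∈ C, p k = 0 := by
  obtain ⟨k₀, hk₀⟩ := exists_consec_right hC0 hCl hn
  have hpos := sub_pos.mpr (ht 0 k₀ hk₀.2.2.1 (hCn _ hk₀.2.1))
  obtain ⟨m, hm⟩ : ∃ m, m * (t k₀ - t 0) = p k₀ - p 0 := ⟨_, div_mul_cancel₀ _ hpos.ne'⟩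
  have htC : ∀ j ∈ C, ∀ k ∈ C, j < k → t j < t k := fun j _ k hk hjk => ht j k hjk (hCn k hk)
  have h1 := below_right C t p htC (fun i j k hij hjk => (h i j k hij hjk).le) 0 hC0 m
    (fun k hk => by obtain rfl := hk₀.right_unique hk; exact hm.ge)
  have h2 := below_right C t (fun k => - p k) htC
    (fun i j k hij hjk => by linarith [h i j k hij hjk]) 0 hC0 (-m)
    (fun k hk => by obtain rfl := hk₀.right_unique hk; linarith)
  have h3 : ∀ k ∈ C, p k = m * (t k - t 0) := fun k hk => by
    linarith [h1 k hk (Nat.zero_le k), h2 k hk (Nat.zero_le k)]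
  have hm0 : m = 0 := by
    have := h3 n hCl
    rw [hpn] at this
    rcases mul_eq_zero.mp this.symm with h4 | h4
    · exact h4
    · linarith [ht 0 n hn le_rfl]
  intro k hk
  rw [h3 k hk, hm0, zero_mul]

/-! ### Prefix sums and total stability in terms of cuts -/

/-- Extension of a vector by zero to all natural indices. -/
def extZ {n : ℕ} (v : Fin n → ℝ) (i : ℕ) : ℝ := if h : i < n then v ⟨i, h⟩ else 0

/-- The sum of the first `k` coordinates. -/
def pre {n : ℕ} (v : Fin n → ℝ) (k : ℕ) : ℝ := ∑ i ∈ Finset.range k, extZ v i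

lemma extZ_val {n : ℕ} (v : Fin n → ℝ) (z : Fin n) : extZ v z = v z := by simp [extZ]

lemma pre_zero {n : ℕ} (v : Fin n → ℝ) : pre v 0 = 0 := by simp [pre]

lemma pre_succ {n : ℕ} (v : Fin n → ℝ) (k : ℕ) : pre v (k + 1) = pre v k + extZ v k :=
  Finset.sum_range_succ _ _

lemma pre_add {n : ℕ} (v v' : Fin n → ℝ) (k : ℕ) : pre (v + v') k = pre v k + pre v' k := by
  unfold pre
  rw [← Finset.sum_add_distrib]
  refine Finset.sum_congr rfl fun i _ => ?_
  unfold extZ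
  split_ifs <;> simp

lemma pre_smul {n : ℕ} (s : ℝ) (v : Fin n → ℝ) (k : ℕ) : pre (s • v) k = s * pre v k := by
  unfold pre
  rw [Finset.mul_sum]
  refine Finset.sum_congr rfl fun i _ => ?_
  unfold extZ
  split_ifs <;> simp

lemma pre_lt {n : ℕ} {r : Fin n → ℝ} (hr : ∀ i, 0 < r i) (j k : ℕ) (hjk : j < k) (hk : k ≤ n) :
    pre r j < pre r k := by
  induction k, hjk using Nat.le_induction with
  | base =>
    have : j < n := hk
    rw [pre_succ]
    simp [extZ, this, hr]
  | succ k hk' ih =>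
    have : k < n := hk
    have h := ih this.le
    rw [pre_succ]
    have : 0 < extZ r k := by simp [extZ, this, hr]
    linarith

lemma sum_eq_extZ {n : ℕ} (v : Fin n → ℝ) (S : Finset (Fin n)) :
    ∑ z ∈ S, v z = ∑ i ∈ S.map Fin.valEmbedding, extZ v i := by
  simp [Finset.sum_map, extZ_val]

lemma sum_Icc {n : ℕ} (v : Fin n → ℝ) (a b : Fin n) (hab : a ≤ b) :
    ∑ z ∈ Finset.Icc a b, v z = pre v (b + 1) - pre v a := by
  have hab' : (a : ℕ) ≤ b + 1 := Nat.le_succ_of_le hab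
  rw [sum_eq_extZ, Fin.map_valEmbedding_Icc, pre, pre, ← Finset.sum_Ico_eq_sub _ hab']
  rfl

/-- The sign attached to an arrow: `1` for `→`, `-1` for `←`. -/
def sg (b : Bool) : ℝ := if b then 1 else -1

/-- Total stability restricted to intervals cut into two intervals. The cut before vertex `c`
passes through the arrow with index `c - 1`. -/
def CutStable {n : ℕ} (ε : ℕ → Bool) (w r : Fin n → ℝ) : Prop :=
  ∀ a c b : ℕ, a < c → c < b → b ≤ n →
    sg (ε (c - 1)) * ((pre w b - pre w c) * (pre r c - pre r a)) <
      sg (ε (c - 1)) * ((pre w c - pre w a) * (pre r b - pre r c))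

lemma cutStable_of_totallyStable {n : ℕ} {ε : ℕ → Bool} {w r : Fin n → ℝ} (hr : ∀ i, 0 < r i)
    (h : TotallyStable ε w r) : CutStable ε w r := by
  intro a c b hac hcb hb
  have t1 := pre_lt hr a c hac (by omega)
  have t2 := pre_lt hr c b hcb hb
  have hb1 : b - 1 + 1 = b := by omega
  have hc1 : c - 1 + 1 = c := by omega
  let A : Fin n := ⟨a, by omega⟩
  let B : Fin n := ⟨b - 1, by omega⟩
  have hAB : A ≤ B := Fin.mk_le_mk.mpr (by omega)
  cases hε : ε (c - 1) with
  | true =>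
    let X : Fin n := ⟨c, by omega⟩
    have hXB : X ≤ B := Fin.mk_le_mk.mpr (by omega)
    have key := h (Finset.Icc A B) (Finset.Icc X B) ⟨A, B, rfl⟩
      (Finset.Icc_subset_Icc_left (Fin.mk_le_mk.mpr hac.le)) (Finset.nonempty_Icc.mpr hXB)
      (fun heq => by
        have hA : A ∈ Finset.Icc X B := heq ▸ Finset.left_mem_Icc.mpr hAB
        exact absurd (Finset.mem_Icc.mp hA).1 (not_le.mpr (Fin.mk_lt_mk.mpr hac)))
      (by
        intro i j hi hj hij
        simp only [Finset.mem_Icc, Fin.le_def, A, B, X] at hi hj ⊢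
        refine ⟨fun _ _ => by omega, fun hf hjX => ?_⟩
        have : (i : ℕ) ≠ c - 1 := fun hic => by rw [hic, hε] at hf; cases hf
        omega)
    unfold muSlope at key
    rw [sum_Icc _ _ _ hXB, sum_Icc _ _ _ hXB, sum_Icc _ _ _ hAB, sum_Icc _ _ _ hAB] at key
    simp only [A, B, X, hb1] at key
    rw [div_lt_div_iff₀ (by linarith) (by linarith)] at key
    simp only [sg, if_true]
    linarith
  | false =>
    let X : Fin n := ⟨c - 1, by omega⟩
    have hAX : A ≤ X := Fin.mk_le_mk.mpr (by omega)
    have key := h (Finset.Icc A B) (Finset.Icc A X) ⟨A, B, rfl⟩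
      (Finset.Icc_subset_Icc_right (Fin.mk_le_mk.mpr (by omega))) (Finset.nonempty_Icc.mpr hAX)
      (fun heq => by
        have hB : B ∈ Finset.Icc A X := heq ▸ Finset.right_mem_Icc.mpr hAB
        exact absurd (Finset.mem_Icc.mp hB).2 (not_le.mpr (Fin.mk_lt_mk.mpr (by omega))))
      (by
        intro i j hi hj hij
        simp only [Finset.mem_Icc, Fin.le_def, A, B, X] at hi hj ⊢
        refine ⟨fun hf hiX => ?_, fun _ _ => by omega⟩
        have : (i : ℕ) ≠ c - 1 := fun hic => by rw [hic, hε] at hf; cases hf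
        omega)
    unfold muSlope at key
    rw [sum_Icc _ _ _ hAX, sum_Icc _ _ _ hAX, sum_Icc _ _ _ hAB, sum_Icc _ _ _ hAB] at key
    simp only [A, B, X, hb1, hc1] at key
    rw [div_lt_div_iff₀ (by linarith) (by linarith)] at key
    simp only [sg, Bool.false_eq_true, if_false]
    linarith

lemma summation_by_parts (f q : ℕ → ℝ) (N : ℕ) :
    ∑ i ∈ Finset.range N, f i * (q (i + 1) - q i) =
      f N * q N - f 0 * q 0 - ∑ i ∈ Finset.range N, q (i + 1) * (f (i + 1) - f i) := by
  induction N with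
  | zero => simp
  | succ N ih => rw [Finset.sum_range_succ, Finset.sum_range_succ, ih]; ring

/-- A proper nonempty part of an interval changes its membership somewhere. -/
lemma exists_jump (S : Finset ℕ) (a b : ℕ) (hS : S ⊆ Finset.Icc a b) (hne : S.Nonempty)
    (hST : S ≠ Finset.Icc a b) :
    ∃ i, a ≤ i ∧ i < b ∧ ¬ (i ∈ S ↔ i + 1 ∈ S) := by
  by_contra hcon
  push Not at hcon
  have hall : ∀ k, a ≤ k → k ≤ b → (k ∈ S ↔ a ∈ S) := by
    intro k hk
    induction k, hk using Nat.le_induction with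
    | base => simp
    | succ k hk ih => intro hkb; rw [← hcon k hk (by omega)]; exact ih (by omega)
  obtain ⟨z, hz⟩ := hne
  have hz' := Finset.mem_Icc.mp (hS hz)
  have ha : a ∈ S := (hall z hz'.1 hz'.2).mp hz
  refine hST (Finset.Subset.antisymm hS fun k hk => ?_)
  have hk' := Finset.mem_Icc.mp hk
  exact (hall k hk'.1 hk'.2).mpr ha

/-- Summation by parts writes the excess of a successor-closed `S` over the chord as minus a sum
over the cuts inside the interval; the sign of the height at a cut agrees with the direction in
which membership in `S` can jump there. -/
lemma totallyStable_of_cutStable {n : ℕ} {ε : ℕ → Bool} {w r : Fin n → ℝ} (hr : ∀ i, 0 < r i)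
    (h : CutStable ε w r) : TotallyStable ε w r := by
  rintro T S ⟨A, B, rfl⟩ hST hSne hne hcl
  have hAB : A ≤ B := Finset.nonempty_Icc.mp (hSne.mono hST)
  have hABn : (A : ℕ) < (B : ℕ) + 1 := Nat.lt_succ_of_le hAB
  have hBn : (B : ℕ) + 1 ≤ n := B.2
  have hRT := sub_pos.mpr (pre_lt hr _ _ hABn hBn)
  have hRS : 0 < ∑ z ∈ S, r z := Finset.sum_pos (fun i _ => hr i) hSne
  set μ := muSlope w r (Finset.Icc A B) with hμ
  have hμ' : pre w (B + 1) - pre w A = μ * (pre r (B + 1) - pre r A) := by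
    rw [hμ, muSlope, sum_Icc _ _ _ hAB, sum_Icc _ _ _ hAB, div_mul_cancel₀ _ hRT.ne']
  rw [muSlope, div_lt_iff₀ hRS]
  -- `q k` is the height of the `k`-th point above the chord belonging to `Icc A B`
  let q : ℕ → ℝ := fun k => pre w k - pre w A - μ * (pre r k - pre r A)
  have hqA : q A = 0 := by simp [q]
  have hqB : q (B + 1) = 0 := by simp only [q]; linarith
  have hq : ∀ c, (A : ℕ) < c → c < (B : ℕ) + 1 → 0 < sg (ε (c - 1)) * q c := by
    intro c hAc hcB
    have h1 := h A c (B + 1) hAc hcB hBn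
    have h2 : 0 < (sg (ε (c - 1)) * q c) * (pre r (B + 1) - pre r A) := by
      have : (sg (ε (c - 1)) * q c) * (pre r (B + 1) - pre r A) =
          sg (ε (c - 1)) * ((pre w c - pre w A) * (pre r (B + 1) - pre r c)) -
          sg (ε (c - 1)) * ((pre w (B + 1) - pre w c) * (pre r c - pre r A)) := by
        simp only [q]
        linear_combination sg (ε (c - 1)) * (pre r c - pre r A) * hμ'
      rw [this]
      linarith
    exact pos_of_mul_pos_left h2 hRT.le
  let S' : Finset ℕ := S.map Fin.valEmbedding
  have hS'mem : ∀ z : Fin n, (z : ℕ) ∈ S' ↔ z ∈ S := fun z => by simp [S', ← Fin.ext_iff]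
  have hS' : S' ⊆ Finset.Icc (A : ℕ) B := by
    rw [← Fin.map_valEmbedding_Icc]; exact Finset.map_subset_map.mpr hST
  have hS'ne : S' ≠ Finset.Icc (A : ℕ) B := by
    rw [← Fin.map_valEmbedding_Icc]
    exact fun heq => hne (Finset.map_injective _ heq)
  let f : ℕ → ℝ := fun i => if i ∈ S' then 1 else 0
  have hf : ∀ i, ¬ ((A : ℕ) ≤ i ∧ i ≤ B) → f i = 0 := by
    intro i hi
    have : i ∉ S' := fun hmem => hi (Finset.mem_Icc.mp (hS' hmem))
    simp [f, this]
  have hsum : ∑ z ∈ S, w z - μ * ∑ z ∈ S, r z =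
      ∑ i ∈ Finset.range n, f i * (q (i + 1) - q i) := by
    rw [sum_eq_extZ, sum_eq_extZ, Finset.mul_sum, ← Finset.sum_sub_distrib]
    have hsub : S' ⊆ Finset.range n := fun i hi => by
      have := Finset.mem_Icc.mp (hS' hi)
      simp only [Finset.mem_range]; omega
    rw [← Finset.sum_subset hsub (fun i _ hi => by simp [f, hi])]
    refine Finset.sum_congr rfl fun i hi => ?_
    have : f i = 1 := if_pos hi
    simp only [this, q, pre_succ]
    ring
  have hterm : ∀ i, (A : ℕ) ≤ i → i < B →
      0 ≤ q (i + 1) * (f (i + 1) - f i) ∧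
        (¬ (i ∈ S' ↔ i + 1 ∈ S') → 0 < q (i + 1) * (f (i + 1) - f i)) := by
    intro i hAi hiB
    have hqi := hq (i + 1) (by omega) (by omega)
    rw [Nat.add_sub_cancel] at hqi
    have hin : i < n := by omega
    have hin' : i + 1 < n := by omega
    have hc := hcl ⟨i, hin⟩ ⟨i + 1, hin'⟩
      (Finset.mem_Icc.mpr ⟨Fin.mk_le_mk.mpr hAi, Fin.mk_le_mk.mpr hiB.le⟩)
      (Finset.mem_Icc.mpr ⟨Fin.mk_le_mk.mpr (by omega), Fin.mk_le_mk.mpr (by omega)⟩) rfl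
    rw [← hS'mem ⟨i, hin⟩, ← hS'mem ⟨i + 1, hin'⟩] at hc
    simp only at hc
    cases hε : ε i <;> simp only [hε, sg, if_true, Bool.false_eq_true, if_false] at hqi hc <;>
      by_cases h1 : i ∈ S' <;> by_cases h2 : i + 1 ∈ S' <;>
      simp [f, h1, h2] at hc hqi ⊢ <;> (try constructor) <;> linarith
  have hpos : 0 < ∑ i ∈ Finset.range n, q (i + 1) * (f (i + 1) - f i) := by
    obtain ⟨i, hAi, hiB, hi⟩ := exists_jump S' A B hS' (hSne.map) hS'ne
    refine Finset.sum_pos' (fun k _ => ?_)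
      ⟨i, Finset.mem_range.mpr (by omega), (hterm i hAi hiB).2 hi⟩
    by_cases h1 : (A : ℕ) ≤ k ∧ k < B
    · exact (hterm k h1.1 h1.2).1
    · by_cases h2 : k + 1 = A
      · rw [h2, hqA, zero_mul]
      · by_cases h3 : k = B
        · rw [h3, hqB, zero_mul]
        · rw [hf (k + 1) (by omega), hf k (by omega)]
          simp
  have hn0 : f n * q n = 0 := by rw [hf n (by omega), zero_mul]
  have h00 : f 0 * q 0 = 0 := by
    by_cases hA : (A : ℕ) = 0
    · rw [hA] at hqA; rw [hqA, mul_zero]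
    · rw [hf 0 (by omega), zero_mul]
  rw [summation_by_parts, hn0, h00] at hsum
  linarith

lemma totallyStable_iff {n : ℕ} (ε : ℕ → Bool) (w r : Fin n → ℝ) (hr : ∀ i, 0 < r i) :
    TotallyStable ε w r ↔ CutStable ε w r :=
  ⟨cutStable_of_totallyStable hr, totallyStable_of_cutStable hr⟩

/-! ### The simplicial cone -/

/-- The indices of the points of one colour (`true` for upper, `false` for lower), together with
the two end points. -/
def chain (n : ℕ) (ε : ℕ → Bool) (b : Bool) : Finset ℕ :=
  (Finset.range (n + 1)).filter (fun k => k = 0 ∨ k = n ∨ ε (k - 1) = b)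

lemma mem_chain {n : ℕ} {ε : ℕ → Bool} {b : Bool} {k : ℕ} :
    k ∈ chain n ε b ↔ k ≤ n ∧ (k = 0 ∨ k = n ∨ ε (k - 1) = b) := by
  simp [chain]

lemma zero_mem_chain (n : ℕ) (ε : ℕ → Bool) (b : Bool) : 0 ∈ chain n ε b :=
  mem_chain.mpr ⟨Nat.zero_le _, Or.inl rfl⟩

lemma last_mem_chain (n : ℕ) (ε : ℕ → Bool) (b : Bool) : n ∈ chain n ε b :=
  mem_chain.mpr ⟨le_rfl, Or.inr (Or.inl rfl)⟩

/-- A point between two points of its chain is an interior point, so it has the colour of the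
chain. -/
lemma color_of_consec {n : ℕ} {ε : ℕ → Bool} {b : Bool} {i j k : ℕ}
    (hij : Consec (chain n ε b) i j) (hjk : Consec (chain n ε b) j k) :
    0 < j ∧ j < n ∧ ε (j - 1) = b := by
  have h1 := hij.2.2.1
  have h2 := hjk.2.2.1
  have h3 := (mem_chain.mp hjk.2.1).1
  have h4 := (mem_chain.mp hij.2.1).2
  refine ⟨by omega, by omega, ?_⟩
  rcases h4 with h | h | h
  · omega
  · omega
  · exact h

/-- The inequalities at consecutive triples of the two chains: the upper chain is strictly
concave, the lower chain strictly convex. -/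
def InCone {n : ℕ} (ε : ℕ → Bool) (w r : Fin n → ℝ) : Prop :=
  ∀ b i j k, Consec (chain n ε b) i j → Consec (chain n ε b) j k →
    sg b * ((pre w k - pre w j) * (pre r j - pre r i)) <
      sg b * ((pre w j - pre w i) * (pre r k - pre r j))

lemma cone_of_cut {n : ℕ} {ε : ℕ → Bool} {w r : Fin n → ℝ} (h : CutStable ε w r) :
    InCone ε w r := by
  intro b i j k hij hjk
  obtain ⟨-, -, hε⟩ := color_of_consec hij hjk
  have := h i j k hij.2.2.1 hjk.2.2.1 (mem_chain.mp hjk.2.1).1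
  rwa [hε] at this

lemma cut_of_cone {n : ℕ} {ε : ℕ → Bool} {w r : Fin n → ℝ} (hr : ∀ i, 0 < r i)
    (h : InCone ε w r) : CutStable ε w r := by
  intro a c b hac hcb hb
  have hcov : ∀ β, ∀ k ≤ n, k ∈ chain n ε β ∨ k ∈ chain n ε (!β) := by
    intro β k hk
    simp only [mem_chain]
    cases β <;> cases ε (k - 1) <;> simp [hk]
  have hle : ∀ β, ∀ k ∈ chain n ε β, k ≤ n := fun β k hk => (mem_chain.mp hk).1
  have hc : c ∈ chain n ε (ε (c - 1)) := mem_chain.mpr ⟨by omega, Or.inr (Or.inr rfl)⟩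
  -- for a lower point `c`, the roles of the two chains are exchanged by reflecting `p` to `-p`
  have key := chord_of_chains n (chain n ε (ε (c - 1))) (chain n ε (!ε (c - 1))) (pre r)
    (fun k => sg (ε (c - 1)) * pre w k) (pre_lt hr) (hle _) (hle _) (hcov _)
    (zero_mem_chain _ _ _) (last_mem_chain _ _ _) (zero_mem_chain _ _ _) (last_mem_chain _ _ _)
    (fun i j k hij hjk => by have := h _ i j k hij hjk; linarith)
    (fun i j k hij hjk => by
      have h1 := h _ i j k hij hjk
      have h2 : sg (!ε (c - 1)) = - sg (ε (c - 1)) := by cases ε (c - 1) <;> simp [sg]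
      rw [h2] at h1
      linarith)
    hc hac hcb hb
  linarith

/-- The coordinates cutting out the fiber: the total sum of `w` at index `0`, and at index `c > 0`
the signed concavity defect at `c` between the chain neighbours `u c` and `v c`. -/
def coords {n : ℕ} (ε : ℕ → Bool) (r : Fin n → ℝ) (u v : Fin n → ℕ) :
    (Fin n → ℝ) →ₗ[ℝ] (Fin n → ℝ) where
  toFun w c := if (c : ℕ) = 0 then pre w n else
    sg (ε (c - 1)) * ((pre w c - pre w (u c)) * (pre r (v c) - pre r c)) -
      sg (ε (c - 1)) * ((pre w (v c) - pre w c) * (pre r c - pre r (u c)))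
  map_add' w w' := by
    ext c
    simp only [pre_add, Pi.add_apply]
    split_ifs <;> ring
  map_smul' s w := by
    ext c
    simp only [pre_smul, Pi.smul_apply, smul_eq_mul, RingHom.id_apply]
    split_ifs <;> ring

lemma coords_injective {n : ℕ} (hn : 0 < n) (ε : ℕ → Bool) (r : Fin n → ℝ) (hr : ∀ i, 0 < r i)
    (u v : Fin n → ℕ)
    (huv : ∀ c : Fin n, (c : ℕ) ≠ 0 → Consec (chain n ε (ε (c - 1))) (u c) c ∧
      Consec (chain n ε (ε (c - 1))) c (v c)) :
    Function.Injective (coords ε r u v) := by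
  rw [← LinearMap.ker_eq_bot, LinearMap.ker_eq_bot']
  intro w hw
  have hpn : pre w n = 0 := by simpa [coords] using congrFun hw ⟨0, hn⟩
  have hflat : ∀ k ≤ n, pre w k = 0 := by
    intro k hk
    refine eq_zero_of_flat n hn (chain n ε (ε (k - 1))) (pre r) (pre w) (pre_lt hr)
      (fun k hk => (mem_chain.mp hk).1) (zero_mem_chain _ _ _) (last_mem_chain _ _ _)
      (pre_zero w) hpn ?_ k (mem_chain.mpr ⟨hk, Or.inr (Or.inr rfl)⟩)
    intro i j l hij hjl
    obtain ⟨hj0, hjn, hε⟩ := color_of_consec hij hjl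
    have h1 := huv ⟨j, hjn⟩ hj0.ne'
    have h2 := congrFun hw ⟨j, hjn⟩
    simp only [hε] at h1
    simp only [coords, LinearMap.coe_mk, AddHom.coe_mk, hj0.ne', if_false, Pi.zero_apply,
      h1.1.left_unique hij, h1.2.right_unique hjl, ← mul_sub] at h2
    have h3 : sg (ε (j - 1)) ≠ 0 := by cases ε (j - 1) <;> simp [sg]
    have h4 := (mul_eq_zero.mp h2).resolve_left h3
    linarith
  ext c
  have h1 := pre_succ w c
  rw [hflat _ c.2, hflat _ c.2.le, extZ_val] at h1
  simp only [Pi.zero_apply]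
  linarith

/-- the fiber `TS_r(ε)` is linearly equivalent to `ℝ × (ℝ_{>0})^{n-1}`:
some linear automorphism `L` of `ℝ^n` maps `{v : v_2 > 0, …, v_n > 0}` (first coordinate
free, the other `n-1` coordinates positive) bijectively onto `TS_r(ε)`. -/
theorem fiber_linearly_equivalent (n : ℕ) (hn : 0 < n) (ε : ℕ → Bool)
    (r : Fin n → ℝ) (hr : ∀ i, 0 < r i) :
    ∃ L : (Fin n → ℝ) ≃ₗ[ℝ] (Fin n → ℝ),
      (⇑L) '' {v : Fin n → ℝ | ∀ i : Fin n, (i : ℕ) ≠ 0 → 0 < v i} =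
        {w : Fin n → ℝ | TotallyStable ε w r} := by
  have hex : ∀ c : Fin n, ∃ i k : ℕ, (c : ℕ) ≠ 0 →
      Consec (chain n ε (ε (c - 1))) i c ∧ Consec (chain n ε (ε (c - 1))) c k := by
    intro c
    by_cases hc0 : (c : ℕ) = 0
    · exact ⟨0, 0, fun h => absurd hc0 h⟩
    · have hc : (c : ℕ) ∈ chain n ε (ε (c - 1)) :=
        mem_chain.mpr ⟨c.2.le, Or.inr (Or.inr rfl)⟩
      obtain ⟨i, hi, -⟩ := exists_consec_left hc (zero_mem_chain _ _ _) (Nat.pos_of_ne_zero hc0)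
      obtain ⟨k, hk⟩ := exists_consec_right hc (last_mem_chain _ _ _) c.2
      exact ⟨i, k, fun _ => ⟨hi, hk⟩⟩
  choose u v huv using hex
  have hcone : ∀ w : Fin n → ℝ, TotallyStable ε w r ↔
      ∀ c : Fin n, (c : ℕ) ≠ 0 → 0 < coords ε r u v w c := by
    intro w
    rw [totallyStable_iff ε w r hr]
    constructor
    · intro h c hc
      have h1 := cone_of_cut h _ _ _ _ (huv c hc).1 (huv c hc).2
      simp only [coords, LinearMap.coe_mk, AddHom.coe_mk, hc, if_false]
      exact sub_pos.mpr h1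
    · intro h
      refine cut_of_cone hr fun b i j k hij hjk => ?_
      obtain ⟨hj0, hjn, rfl⟩ := color_of_consec hij hjk
      have h1 := huv ⟨j, hjn⟩ hj0.ne'
      have h2 := h ⟨j, hjn⟩ hj0.ne'
      simp only [coords, LinearMap.coe_mk, AddHom.coe_mk, hj0.ne', if_false,
        h1.1.left_unique hij, h1.2.right_unique hjk] at h2
      exact sub_pos.mp h2
  let G := LinearEquiv.ofInjectiveEndo (coords ε r u v) (coords_injective hn ε r hr u v huv)
  refine ⟨G.symm, ?_⟩
  ext w
  rw [Set.mem_ofPred_eq, hcone w]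
  constructor
  · rintro ⟨x, hx, rfl⟩ c hc
    have : coords ε r u v (G.symm x) = x := G.apply_symm_apply x
    rw [this]
    exact hx c hc
  · intro h
    exact ⟨G w, h, G.symm_apply_apply w⟩
end

section
/- Fix an orientation ε of the type A_n quiver and r ∈ (ℝ_{>0})^n. If w ∈ TS_r(ε) and η ∈ ℝ^n are such that w + cη ∈ TS_r(ε) for every c ∈ ℝ, then η is a scalar multiple of r. Hence the only linear subspace of ℝ^n having a translate contained in a nonempty TS_r(ε) is the line ℝr. -/
/-!
Only two-vertex intervals are needed. If `{s, t}` are adjacent vertices with an arrow `t → s`,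
then `{s}` is successor-closed in `{s, t}`, and total stability gives `w s * r t < w t * r s`
(`TotallyStable.mul_lt_mul`). When this holds with `w + c • η` in place of `w` for every real `c`,
a linear function of `c` is bounded above on the whole line, so its coefficient
`η s * r t - η t * r s` vanishes. Hence `η / r` agrees on adjacent vertices, and it is constant
because the quiver is connected. The statement on subspaces follows by applying this to each
line `ℝ v` with `v ∈ V`.
-/

open Finset

/-- The stability inequality for a two-vertex interval, with denominators cleared: the slope of
the sink `s` of the arrow is smaller than the slope of its source `t`. -/
lemma TotallyStable.mul_lt_mul {n : ℕ} {ε : ℕ → Bool} {w r : Fin n → ℝ}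
    (hr : ∀ i, 0 < r i) (h : TotallyStable ε w r) {s t : Fin n} (hst : s ≠ t)
    (hT : IsInterval {s, t}) (hS : SuccClosed ε {s, t} {s}) :
    w s * r t < w t * r s := by
  have hne : ({s} : Finset (Fin n)) ≠ {s, t} := by
    intro he
    have ht : t ∈ ({s} : Finset (Fin n)) := by rw [he]; simp
    exact hst (Finset.mem_singleton.mp ht).symm
  have hlt := h {s, t} {s} hT (by simp) (by simp) hne hS
  simp only [muSlope, Finset.sum_singleton, Finset.sum_pair hst] at hlt
  rw [div_lt_div_iff₀ (hr s) (add_pos (hr s) (hr t))] at hlt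
  linarith

/-- A linear function bounded above on all of `ℝ` is zero. -/
lemma eq_zero_of_forall_mul_lt {a b : ℝ} (h : ∀ c : ℝ, c * a < b) : a = 0 := by
  by_contra ha
  have := h (b / a)
  rw [div_mul_cancel₀ b ha] at this
  exact lt_irrefl _ this

lemma cross_eq_of_line {n : ℕ} {ε : ℕ → Bool} {w η r : Fin n → ℝ}
    (hr : ∀ i, 0 < r i) (h : ∀ c : ℝ, TotallyStable ε (w + c • η) r) {s t : Fin n}
    (hst : s ≠ t) (hT : IsInterval {s, t}) (hS : SuccClosed ε {s, t} {s}) :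
    η s * r t = η t * r s := by
  refine sub_eq_zero.mp (eq_zero_of_forall_mul_lt (b := w t * r s - w s * r t) fun c => ?_)
  have := (h c).mul_lt_mul hr hst hT hS
  simp only [Pi.add_apply, Pi.smul_apply, smul_eq_mul] at this
  linarith

/-- Adjacent vertices have the same ratio `η / r`, whichever way the arrow between them points. -/
lemma cross_eq_succ {n : ℕ} {ε : ℕ → Bool} {w η r : Fin n → ℝ}
    (hr : ∀ i, 0 < r i) (h : ∀ c : ℝ, TotallyStable ε (w + c • η) r) {i j : Fin n}
    (hij : (j : ℕ) = (i : ℕ) + 1) : η i * r j = η j * r i := by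
  have hne : i ≠ j := by
    rintro rfl
    omega
  have hT : IsInterval ({i, j} : Finset (Fin n)) := by
    refine ⟨i, j, ?_⟩
    ext x
    simp only [Finset.mem_insert, Finset.mem_singleton, Finset.mem_Icc, Fin.ext_iff, Fin.le_def]
    omega
  cases hε : ε (i : ℕ) with
  | true =>
    refine (cross_eq_of_line hr h hne.symm (by rwa [Finset.pair_comm]) ?_).symm
    intro a b ha hb hab
    simp only [Finset.mem_insert, Finset.mem_singleton, Fin.ext_iff] at ha hb ⊢
    have hai : (a : ℕ) = i := by omega
    refine ⟨fun _ _ => by omega, fun hf => ?_⟩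
    rw [hai, hε] at hf
    cases hf
  | false =>
    refine cross_eq_of_line hr h hne hT ?_
    intro a b ha hb hab
    simp only [Finset.mem_insert, Finset.mem_singleton, Fin.ext_iff] at ha hb ⊢
    have hai : (a : ℕ) = i := by omega
    refine ⟨fun hf => ?_, fun _ _ => hai⟩
    rw [hai, hε] at hf
    cases hf

lemma exists_smul_of_line {n : ℕ} (hn : 0 < n) {ε : ℕ → Bool} {w η r : Fin n → ℝ}
    (hr : ∀ i, 0 < r i) (h : ∀ c : ℝ, TotallyStable ε (w + c • η) r) :
    ∃ t : ℝ, η = t • r := by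
  have key : ∀ (m : ℕ) (hm : m < n), η ⟨m, hm⟩ = η ⟨0, hn⟩ / r ⟨0, hn⟩ * r ⟨m, hm⟩ := by
    intro m
    induction m with
    | zero => intro hm; exact (div_mul_cancel₀ _ (hr _).ne').symm
    | succ k ih =>
      intro hm
      have hk : k < n := by omega
      have hc := cross_eq_succ hr h (i := ⟨k, hk⟩) (j := ⟨k + 1, hm⟩) rfl
      rw [ih hk] at hc
      apply mul_right_cancel₀ (hr ⟨k, hk⟩).ne'
      linarith
  exact ⟨η ⟨0, hn⟩ / r ⟨0, hn⟩, funext fun i => key i i.isLt⟩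

/-- if `w ∈ TS_r(ε)` and `w + cη ∈ TS_r(ε)` for all `c ∈ ℝ`, then `η` is a
scalar multiple of `r`; hence the only linear subspace of `ℝ^n` having a translate
contained in `TS_r(ε)` is (contained in) the line `ℝr`. -/
theorem lineality_of_TS_fiber (n : ℕ) (hn : 0 < n) (ε : ℕ → Bool)
    (r : Fin n → ℝ) (hr : ∀ i, 0 < r i) :
    (∀ w η : Fin n → ℝ, TotallyStable ε w r →
      (∀ c : ℝ, TotallyStable ε (w + c • η) r) → ∃ t : ℝ, η = t • r) ∧
    (∀ (V : Submodule ℝ (Fin n → ℝ)) (w₀ : Fin n → ℝ),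
      (∀ v ∈ V, TotallyStable ε (w₀ + v) r) → V ≤ Submodule.span ℝ {r}) := by
  refine ⟨fun w η _ h => exists_smul_of_line hn hr h, fun V w₀ hV v hv => ?_⟩
  obtain ⟨t, ht⟩ := exists_smul_of_line (η := v) hn hr fun c => hV _ (V.smul_mem c hv)
  exact Submodule.mem_span_singleton.mpr ⟨t, ht.symm⟩
end

section
/- Fix an orientation ε of the type A_n quiver with x(n) ≥ 1 and y(n) ≥ 1 (i.e. the quiver is not equioriented), and fix r ∈ (ℝ_{>0})^n. Define, for w ∈ ℝ^n, the linear functionals f_k(w) = μ_{w,r}(X_k) − μ_{w,r}(X_{k+1}) for 0 ≤ k ≤ x(n)−1 and g_l(w) = μ_{w,r}(Y_{l+1}) − μ_{w,r}(Y_l) for 0 ≤ l ≤ y(n)−1. If nonnegative reals a_k, b_l satisfy Σ_k a_k f_k(w) + Σ_l b_l g_l(w) = 0 for all w ∈ ℝ^n, then all a_k and all b_l are zero. -/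
/-!
The coefficient of `w z` in the vanishing functional is `α (x z) - β (y z)`, where
`α k = (a k - a (k - 1)) / r(X_k)` and `β l = (b l - b (l - 1)) / r(Y_l)`, the sequences `a`, `b`
being extended by zero on both sides of their ranges. Hence `α (x z) = β (y z)` at every vertex
`z`. Neighbouring vertices share their `x`- or their `y`-coordinate, so `α` and `β` are all equal to
one constant `c` (`level_const`). Thus `a k - a (k - 1) = c * r(X_k)` for `0 ≤ k ≤ x(n)`; summing
over `k` gives `0 = c * ∑ r(X_k)` with a positive sum, so `c = 0`, the extended sequence `a` is
constant, and it vanishes because it starts at zero (`coeff_eq_zero`). The same applies to `b`.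
-/

open Finset

/-- The coefficients `a 0, …, a (N - 1)` extended by zero on both sides and shifted by one, so that
`padded N a 0 = 0 = padded N a (N + 1)`. -/
def padded (N : ℕ) (a : ℕ → ℝ) : ℕ → ℝ
  | 0 => 0
  | k + 1 => if k < N then a k else 0

lemma muSlope_single {n : ℕ} (r : Fin n → ℝ) (z : Fin n) (p : Fin n → ℕ) (k : ℕ) :
    muSlope (Pi.single z 1) r (univ.filter (fun i => p i = k)) =
      if p z = k then 1 / ∑ i ∈ univ.filter (fun i => p i = k), r i else 0 := by
  unfold muSlope
  rw [Finset.sum_pi_single']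
  by_cases h : p z = k <;> simp [h]

/-- The coefficient of `w z` in `∑ a k * (μ(S_k) - μ(S_{k+1}))`, where `S_k` is the level set
`p = k`. -/
lemma sum_single {n : ℕ} (r : Fin n → ℝ) (z : Fin n) (p : Fin n → ℕ) (N : ℕ) (a : ℕ → ℝ) :
    ∑ k ∈ range N, a k * (muSlope (Pi.single z 1) r (univ.filter (fun i => p i = k)) -
        muSlope (Pi.single z 1) r (univ.filter (fun i => p i = k + 1))) =
      if p z ≤ N then (padded N a (p z + 1) - padded N a (p z)) /
        ∑ i ∈ univ.filter (fun i => p i = p z), r i else 0 := by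
  simp only [muSlope_single, mul_sub, Finset.sum_sub_distrib, mul_ite, mul_zero]
  rw [Finset.sum_ite_eq]
  rcases hp : p z with _ | q
  · simp [padded, div_eq_mul_inv]
  · simp only [Nat.add_right_cancel_iff]
    rw [Finset.sum_ite_eq]
    simp only [padded, mem_range]
    split_ifs <;> first | omega | ring

/-- Telescoping: if the increments of the padded sequence are `c` times positive weights, then
`c = 0`, since the sequence starts and ends at zero; hence all coefficients vanish. -/
lemma coeff_eq_zero (N : ℕ) (a R : ℕ → ℝ) (c : ℝ) (hR : ∀ k ≤ N, 0 < R k)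
    (h : ∀ k ≤ N, (padded N a (k + 1) - padded N a k) / R k = c) :
    ∀ k < N, a k = 0 := by
  have h' : ∀ k ≤ N, padded N a (k + 1) - padded N a k = c * R k := fun k hk =>
    (div_eq_iff (hR k hk).ne').1 (h k hk)
  have hs : ∑ k ∈ range (N + 1), c * R k = 0 := by
    rw [← Finset.sum_congr rfl (fun k hk => h' k (Nat.lt_succ_iff.1 (mem_range.1 hk))),
      Finset.sum_range_sub]
    simp [padded]
  rw [← Finset.mul_sum] at hs
  have hpos : 0 < ∑ k ∈ range (N + 1), R k :=
    Finset.sum_pos (fun k hk => hR k (Nat.lt_succ_iff.1 (mem_range.1 hk))) (by simp)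
  have hc : c = 0 := (mul_eq_zero.1 hs).resolve_right hpos.ne'
  have hz : ∀ k ≤ N + 1, padded N a k = 0 := by
    intro k
    induction k with
    | zero => intro _; rfl
    | succ k ih =>
      intro hk
      have h1 := h' k (by omega)
      rw [hc, ih (by omega)] at h1
      linarith
  intro k hk
  simpa [padded, hk] using hz (k + 1) (by omega)

/-- A lattice walk from `0` with steps at most `1` attains every value up to its final one. -/
lemma exists_level (p : ℕ → ℕ) (h0 : p 0 = 0) (hp : ∀ m, p (m + 1) ≤ p m + 1) (m : ℕ) :
    ∀ k ≤ p m, ∃ j ≤ m, p j = k := by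
  induction m with
  | zero => intro k hk; exact ⟨0, le_rfl, by omega⟩
  | succ m ih =>
    intro k hk
    rcases Nat.lt_or_ge (p m) k with h | h
    · exact ⟨m + 1, le_rfl, by have := hp m; omega⟩
    · obtain ⟨j, hj, e⟩ := ih k h
      exact ⟨j, by omega, e⟩

/-- If `α (x z) = β (y z)` along the lattice path of `ε`, then this common value does not depend
on `z`, because each step of the path fixes one of the two coordinates. -/
lemma level_const (ε : ℕ → Bool) (n : ℕ) (α β : ℕ → ℝ)
    (h : ∀ m < n, α (xc ε m) = β (yc ε m)) :
    ∀ m < n, α (xc ε m) = α 0 := by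
  intro m
  induction m with
  | zero => intro _; simp [xc]
  | succ m ih =>
    intro hm
    have h1 := ih (by omega)
    have h2 := h m (by omega)
    have h3 := h (m + 1) hm
    rcases he : ε m with _ | _
    · simpa [xc_succ, he] using h1
    · rw [h3, yc_succ]
      simp only [he, Bool.true_eq_false, if_false, add_zero]
      rw [← h2, h1]

/-- for a non-equioriented type `A_n` quiver (`x(n) ≥ 1` and `y(n) ≥ 1`)
and fixed `r ∈ (ℝ_{>0})^n`, if nonnegative reals `a_k, b_l` satisfy
`Σ_k a_k f_k(w) + Σ_l b_l g_l(w) = 0` for all `w`, where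
`f_k(w) = μ(X_k) - μ(X_{k+1})` and `g_l(w) = μ(Y_{l+1}) - μ(Y_l)`,
then all `a_k` and all `b_l` vanish. -/
theorem farkas_coefficients_vanish (n : ℕ) (hn : 0 < n) (ε : ℕ → Bool)
    (hx : 1 ≤ xc ε (n - 1)) (hy : 1 ≤ yc ε (n - 1))
    (r : Fin n → ℝ) (hr : ∀ i, 0 < r i) (a b : ℕ → ℝ)
    (ha : ∀ k, k < xc ε (n - 1) → 0 ≤ a k) (hb : ∀ l, l < yc ε (n - 1) → 0 ≤ b l)
    (hzero : ∀ w : Fin n → ℝ,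
      (∑ k ∈ Finset.range (xc ε (n - 1)),
        a k * (muSlope w r (Xset ε k) - muSlope w r (Xset ε (k + 1)))) +
      (∑ l ∈ Finset.range (yc ε (n - 1)),
        b l * (muSlope w r (Yset ε (l + 1)) - muSlope w r (Yset ε l))) = 0) :
    (∀ k, k < xc ε (n - 1) → a k = 0) ∧ (∀ l, l < yc ε (n - 1) → b l = 0) := by
  have hxs : ∀ m, xc ε (m + 1) ≤ xc ε m + 1 := fun m => by
    rw [xc_succ]; split_ifs <;> omega
  have hys : ∀ m, yc ε (m + 1) ≤ yc ε m + 1 := fun m => by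
    rw [yc_succ]; split_ifs <;> omega
  have hxm : Monotone (xc ε) := monotone_nat_of_le_succ fun m => by rw [xc_succ]; omega
  have hym : Monotone (yc ε) := monotone_nat_of_le_succ fun m => by rw [yc_succ]; omega
  set RX : ℕ → ℝ := fun k => ∑ i ∈ univ.filter (fun i : Fin n => xc ε (i : ℕ) = k), r i with hRX
  set RY : ℕ → ℝ := fun k => ∑ i ∈ univ.filter (fun i : Fin n => yc ε (i : ℕ) = k), r i with hRY
  set N := xc ε (n - 1) with hN
  set M := yc ε (n - 1) with hM
  set α : ℕ → ℝ := fun k => (padded N a (k + 1) - padded N a k) / RX k with hα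
  set β : ℕ → ℝ := fun k => (padded M b (k + 1) - padded M b k) / RY k with hβ
  have hexX := exists_level (xc ε) (by simp [xc]) hxs (n - 1)
  have hexY := exists_level (yc ε) (by simp [yc]) hys (n - 1)
  have hRXpos : ∀ k ≤ N, 0 < RX k := by
    intro k hk
    obtain ⟨j, hj, e⟩ := hexX k hk
    exact Finset.sum_pos (fun i _ => hr i) ⟨⟨j, by omega⟩, by simp [e]⟩
  have hRYpos : ∀ k ≤ M, 0 < RY k := by
    intro k hk
    obtain ⟨j, hj, e⟩ := hexY k hk
    exact Finset.sum_pos (fun i _ => hr i) ⟨⟨j, by omega⟩, by simp [e]⟩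
  -- Testing the relation on the basis vector at the vertex `m` compares the two coefficients.
  have hαβ : ∀ m < n, α (xc ε m) = β (yc ε m) := by
    intro m hm
    have h := hzero (Pi.single ⟨m, hm⟩ 1)
    have h1 := sum_single r ⟨m, hm⟩ (fun i => xc ε (i : ℕ)) N a
    have h2 := sum_single r ⟨m, hm⟩ (fun i => yc ε (i : ℕ)) M b
    rw [if_pos (hxm (by simp only; omega))] at h1
    rw [if_pos (hym (by simp only; omega))] at h2
    have h3 : ∀ u v : ℕ → ℝ, ∑ l ∈ range M, b l * (u l - v l) =
        -∑ l ∈ range M, b l * (v l - u l) := fun u v => by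
      rw [← Finset.sum_neg_distrib]
      exact Finset.sum_congr rfl fun l _ => by ring
    unfold Xset Yset at h
    rw [h3, h1, h2] at h
    simp only [hα, hβ, hRX, hRY]
    linarith
  have hαc := level_const ε n α β hαβ
  constructor
  · refine coeff_eq_zero N a RX (α 0) hRXpos fun k hk => ?_
    obtain ⟨j, hj, e⟩ := hexX k hk
    rw [← hαc j (by omega), e]
  · refine coeff_eq_zero M b RY (α 0) hRYpos fun k hk => ?_
    obtain ⟨j, hj, e⟩ := hexY k hk
    rw [← hαc j (by omega), hαβ j (by omega), e]
end
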